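/- Suppose X'X/n → Q with Q symmetric positive definite, k₂ = 1, and Q₁₂ = 0. Then for every β ∈ ℝ^k with β₂ = 0 and every t ∈ ℝ^k there exists ρ₀ ∈ (0,∞) (depending only on t, Q, σ and α) such that sup_{δ>0} liminf_{n→∞} inf_{F̂_n(t)} sup_{ϑ : ‖ϑ−β‖ < ρ₀/√n} P_{n,ϑ,σ}(|F̂_n(t) − F_{n,ϑ,σ}(t)| > δ) ≥ 1/2, where the infimum extends over all estimators F̂_n(t), i.e., over all real-valued measurable functions of Y. -/

import Mathlib

open MeasureTheory Matrix Real Filter Topology ENNReal NNReal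

noncomputable section

/-- Euclidean norm of a finite tuple. -/
def enorm2 {ι : Type*} [Fintype ι] (v : ι → ℝ) : ℝ := Real.sqrt (∑ i, v i ^ 2)

/-- The `N(0, σ² I)` distribution on `ι → ℝ`, given by its Lebesgue density. -/
def gaussPi (ι : Type*) [Fintype ι] (σ2 : ℝ) : Measure (ι → ℝ) :=
  volume.withDensity fun x => ENNReal.ofReal
    ((2 * π * σ2) ^ (-(Fintype.card ι : ℝ) / 2) * Real.exp (-(enorm2 x) ^ 2 / (2 * σ2)))

/-- The Lebesgue density of the `N(0, σ² Q⁻¹)` distribution on `ι → ℝ`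
(for `Q` symmetric positive definite). -/
def gaussCovDens {ι : Type*} [Fintype ι] [DecidableEq ι] (σ2 : ℝ) (Q : Matrix ι ι ℝ)
    (x : ι → ℝ) : ℝ :=
  (2 * π * σ2) ^ (-(Fintype.card ι : ℝ) / 2) * Real.sqrt Q.det *
    Real.exp (-(x ⬝ᵥ Q.mulVec x) / (2 * σ2))

/-- The `N(0, σ² Q⁻¹)` distribution on `ι → ℝ` (for `Q` symmetric positive definite),
given by its Lebesgue density. -/
def gaussCov {ι : Type*} [Fintype ι] [DecidableEq ι] (σ2 : ℝ) (Q : Matrix ι ι ℝ) :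
    Measure (ι → ℝ) :=
  volume.withDensity fun x => ENNReal.ofReal (gaussCovDens σ2 Q x)

open Classical in
/-- Symmetric positive semidefinite square root (junk value `0` off the psd cone). -/
def msqrt {ι : Type*} [Fintype ι] [DecidableEq ι] (A : Matrix ι ι ℝ) : Matrix ι ι ℝ :=
  if h : A.PosSemidef then
    (h.1.eigenvectorUnitary : Matrix ι ι ℝ) * diagonal (Real.sqrt ∘ h.1.eigenvalues) *
      (star h.1.eigenvectorUnitary : Matrix ι ι ℝ)
  else 0

open Classical in
/-- Smallest eigenvalue of a symmetric matrix (junk value `0` otherwise). -/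
def lamMin {ι : Type*} [Fintype ι] [DecidableEq ι] (A : Matrix ι ι ℝ) : ℝ :=
  if h : A.IsHermitian then ⨅ i, h.eigenvalues i else 0

open Classical in
/-- Largest eigenvalue of a symmetric matrix (junk value `0` otherwise). -/
def lamMax {ι : Type*} [Fintype ι] [DecidableEq ι] (A : Matrix ι ι ℝ) : ℝ :=
  if h : A.IsHermitian then ⨆ i, h.eigenvalues i else 0

variable {n k₁ k₂ : ℕ}

/-- First block of columns of the design matrix. -/
def X1 (X : Matrix (Fin n) (Fin k₁ ⊕ Fin k₂) ℝ) : Matrix (Fin n) (Fin k₁) ℝ :=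
  X.submatrix id Sum.inl

/-- Second block of columns of the design matrix. -/
def X2 (X : Matrix (Fin n) (Fin k₁ ⊕ Fin k₂) ℝ) : Matrix (Fin n) (Fin k₂) ℝ :=
  X.submatrix id Sum.inr

/-- Unrestricted least squares estimator. -/
def betaU (X : Matrix (Fin n) (Fin k₁ ⊕ Fin k₂) ℝ) (Y : Fin n → ℝ) : (Fin k₁ ⊕ Fin k₂) → ℝ :=
  (Xᵀ * X)⁻¹.mulVec (Xᵀ.mulVec Y)

/-- Restricted least squares estimator. -/
def betaR (X : Matrix (Fin n) (Fin k₁ ⊕ Fin k₂) ℝ) (Y : Fin n → ℝ) : (Fin k₁ ⊕ Fin k₂) → ℝ :=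
  Sum.elim (((X1 X)ᵀ * X1 X)⁻¹.mulVec ((X1 X)ᵀ.mulVec Y)) (fun _ => 0)

/-- Risk estimate of the restricted model. -/
def rR (X : Matrix (Fin n) (Fin k₁ ⊕ Fin k₂) ℝ) (σ2 : ℝ) (Y : Fin n → ℝ) : ℝ :=
  Y ⬝ᵥ Y - betaR X Y ⬝ᵥ (Xᵀ * X).mulVec (betaR X Y) + σ2 * (2 * k₁ - n)

/-- Risk estimate of the unrestricted model. -/
def rU (X : Matrix (Fin n) (Fin k₁ ⊕ Fin k₂) ℝ) (σ2 : ℝ) (Y : Fin n → ℝ) : ℝ :=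
  Y ⬝ᵥ Y - betaU X Y ⬝ᵥ (Xᵀ * X).mulVec (betaU X Y) + σ2 * (2 * (k₁ + k₂) - n)

/-- The model averaging weight `λ̂`. -/
def lamHat (α σ2 : ℝ) (X : Matrix (Fin n) (Fin k₁ ⊕ Fin k₂) ℝ) (Y : Fin n → ℝ) : ℝ :=
  Real.exp (-(α * rR X σ2 Y) / σ2) /
    (Real.exp (-(α * rR X σ2 Y) / σ2) + Real.exp (-(α * rU X σ2 Y) / σ2))

/-- Leung and Barron's model averaging estimator `β̃`. -/
def mavg (α σ2 : ℝ) (X : Matrix (Fin n) (Fin k₁ ⊕ Fin k₂) ℝ) (Y : Fin n → ℝ) :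
    (Fin k₁ ⊕ Fin k₂) → ℝ :=
  lamHat α σ2 X Y • betaR X Y + (1 - lamHat α σ2 X Y) • betaU X Y

/-- Projection on the column space of `X₁`. -/
def projR (X : Matrix (Fin n) (Fin k₁ ⊕ Fin k₂) ℝ) : Matrix (Fin n) (Fin n) ℝ :=
  X1 X * ((X1 X)ᵀ * X1 X)⁻¹ * (X1 X)ᵀ

/-- Projection on the column space of `X`. -/
def projU (X : Matrix (Fin n) (Fin k₁ ⊕ Fin k₂) ℝ) : Matrix (Fin n) (Fin n) ℝ :=
  X * (Xᵀ * X)⁻¹ * Xᵀ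

/-- The distribution `P_{n,β,σ}` of `Y = Xβ + u`, `u ~ N(0, σ² Iₙ)`. -/
def Pmeas (X : Matrix (Fin n) (Fin k₁ ⊕ Fin k₂) ℝ) (β : (Fin k₁ ⊕ Fin k₂) → ℝ) (σ2 : ℝ) :
    Measure (Fin n → ℝ) :=
  (gaussPi (Fin n) σ2).map (fun u => X.mulVec β + u)

/-- The function `h_{a,b}(ξ) = ξ / (1 + a exp(−ξ²/b))`. -/
def hfun (a b ξ : ℝ) : ℝ := ξ / (1 + a * Real.exp (-ξ ^ 2 / b))

/-- The inverse `g_{a,b}` of `h_{a,b}`. -/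
def gfun (a b : ℝ) : ℝ → ℝ := Function.invFun (hfun a b)

open Classical in
/-- `g(‖w‖) w / ‖w‖`, with the convention that this is `0` for `w = 0`. -/
def gdir (a b : ℝ) {ι : Type*} [Fintype ι] (w : ι → ℝ) : ι → ℝ :=
  if w = 0 then 0 else (gfun a b (enorm2 w) / enorm2 w) • w


/-- The finite-sample density `f_{n,β,σ}` of `√n(β̃ − β)` (Theorem 3 of the paper). -/
def fdens {n k₁ k₂ : ℕ} (X : Matrix (Fin n) (Fin k₁ ⊕ Fin k₂) ℝ)
    (β : (Fin k₁ ⊕ Fin k₂) → ℝ) (σ2 α : ℝ) (t : (Fin k₁ ⊕ Fin k₂) → ℝ) : ℝ :=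
  let a := Real.exp (2 * α * k₂)
  let b := σ2 / α
  let S := (X2 X)ᵀ * (1 - projR X) * X2 X
  let w := (Real.sqrt n)⁻¹ • (msqrt S).mulVec ((t ∘ Sum.inr) + Real.sqrt n • (β ∘ Sum.inr))
  (2 * π * σ2) ^ (-((k₁ : ℝ) + k₂) / 2) * Real.sqrt (((n : ℝ)⁻¹ • (Xᵀ * X)).det) *
    Real.exp (-(enorm2 ((Real.sqrt n)⁻¹ •
        ((msqrt ((X1 X)ᵀ * X1 X)).mulVec (t ∘ Sum.inl) +
          ((msqrt ((X1 X)ᵀ * X1 X))⁻¹ * (X1 X)ᵀ * X2 X).mulVec (t ∘ Sum.inr)))) ^ 2 /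
      (2 * σ2)) *
    (1 + Real.exp (-(α / σ2) * gfun a b (enorm2 w) ^ 2 + 2 * α * k₂)) ^ (k₂ : ℕ) *
    (1 + (2 * α / σ2) * gfun a b (enorm2 w) ^ 2 *
        (1 + Real.exp ((α / σ2) * gfun a b (enorm2 w) ^ 2 - 2 * α * k₂))⁻¹)⁻¹ *
    Real.exp (-(enorm2 (gdir a b w - (msqrt S).mulVec (β ∘ Sum.inr))) ^ 2 / (2 * σ2))

/-- The density `f_{∞,γ}` of the limiting distribution (formula (13) of the paper),
stated for a general symmetric positive definite matrix in place of `Q`. -/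
def fInfty {k₁ k₂ : ℕ} (Q : Matrix (Fin k₁ ⊕ Fin k₂) (Fin k₁ ⊕ Fin k₂) ℝ) (σ2 α : ℝ)
    (γ : Fin k₂ → ℝ) (t : (Fin k₁ ⊕ Fin k₂) → ℝ) : ℝ :=
  let a := Real.exp (2 * α * k₂)
  let b := σ2 / α
  let S := Q.toBlocks₂₂ - Q.toBlocks₂₁ * Q.toBlocks₁₁⁻¹ * Q.toBlocks₁₂
  let w := (msqrt S).mulVec ((t ∘ Sum.inr) + γ)
  (2 * π * σ2) ^ (-((k₁ : ℝ) + k₂) / 2) * Real.sqrt Q.det *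
    Real.exp (-(enorm2 ((msqrt Q.toBlocks₁₁).mulVec (t ∘ Sum.inl) +
        ((msqrt Q.toBlocks₁₁)⁻¹ * Q.toBlocks₁₂).mulVec (t ∘ Sum.inr))) ^ 2 / (2 * σ2)) *
    (1 + Real.exp (-(α / σ2) * gfun a b (enorm2 w) ^ 2 + 2 * α * k₂)) ^ (k₂ : ℕ) *
    (1 + (2 * α / σ2) * gfun a b (enorm2 w) ^ 2 *
        (1 + Real.exp ((α / σ2) * gfun a b (enorm2 w) ^ 2 - 2 * α * k₂))⁻¹)⁻¹ *
    Real.exp (-(enorm2 (gdir a b w - (msqrt S).mulVec γ)) ^ 2 / (2 * σ2))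


/-- The limiting law (12): the distribution of
`B_∞γ + C_∞Z₁ + [1 + exp(2αk₂) exp(−α‖Z₂ + (Q₂₂ − Q₂₁Q₁₁⁻¹Q₁₂)^{1/2}γ‖²/σ²)]⁻¹
  · (D_∞Z₂ − B_∞γ)` with `Z₁ ~ N(0, σ²I_{k₁})`, `Z₂ ~ N(0, σ²I_{k₂})` independent. -/
def limitLaw {k₁ k₂ : ℕ} (Q : Matrix (Fin k₁ ⊕ Fin k₂) (Fin k₁ ⊕ Fin k₂) ℝ) (σ2 α : ℝ)
    (γ : Fin k₂ → ℝ) : Measure ((Fin k₁ ⊕ Fin k₂) → ℝ) :=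
  ((gaussPi (Fin k₁) σ2).prod (gaussPi (Fin k₂) σ2)).map
    (fun Z : (Fin k₁ → ℝ) × (Fin k₂ → ℝ) =>
      (fromRows (Q.toBlocks₁₁⁻¹ * Q.toBlocks₁₂) (-1)).mulVec γ +
      (fromRows (msqrt Q.toBlocks₁₁)⁻¹ 0).mulVec Z.1 +
      (1 + Real.exp (2 * α * k₂) *
          Real.exp (-α * (enorm2 (Z.2 +
            (msqrt (Q.toBlocks₂₂ - Q.toBlocks₂₁ * Q.toBlocks₁₁⁻¹ * Q.toBlocks₁₂)).mulVec
              γ)) ^ 2 / σ2))⁻¹ •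
        ((fromRows
            (-(Q.toBlocks₁₁⁻¹ * Q.toBlocks₁₂ *
              (msqrt (Q.toBlocks₂₂ - Q.toBlocks₂₁ * Q.toBlocks₁₁⁻¹ * Q.toBlocks₁₂))⁻¹))
            ((msqrt (Q.toBlocks₂₂ - Q.toBlocks₂₁ * Q.toBlocks₁₁⁻¹ * Q.toBlocks₁₂))⁻¹)).mulVec
            Z.2 -
          (fromRows (Q.toBlocks₁₁⁻¹ * Q.toBlocks₁₂) (-1)).mulVec γ))

/-!
Under the local parameters `β + h / √n` the squared distance between two mean vectors `Xϑ`
converges to a quadratic form in the difference of the `h`'s, so that by a `χ²` bound nearby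
values of `h` cannot be told apart. On the other hand, `√n (β̃ - ϑ)` is a continuous function of
the Gaussian vector `√n (β̂(U) - ϑ)`, so `F_{n,ϑ,σ}(t)` converges to a limit cdf `φ(h)`, which
depends on `h` only through `γ = h₂`. If `Q₁₂ = 0`, the limit variable is `(w₁, (1 - λ)(w₂ + γ) -
γ)` with `w` Gaussian and `λ ∈ (0, 1)` the limiting weight, a function of `w₂ + γ`. For `γ = -t₂`
the event defining `φ` is exactly `{w ≤ t}`, whereas for `γ = 1 - t₂` it is larger by a set with
nonempty interior; so `φ` is not constant.

On a connected set of local parameters, a nonconstant `φ` takes different values at arbitrarily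
close `h`. An estimator accurate at two such points would test between two laws that are nearly
indistinguishable, which forces an error probability of nearly `1/2` at one of them.
-/

section Gaussian

open Complex (I)

variable {ι : Type*} [Fintype ι] {σ2 : ℝ}

/-- The Lebesgue density of `N(0, σ² I)` that defines `gaussPi`. -/
def gaussPiDens (ι : Type*) [Fintype ι] (σ2 : ℝ) (x : ι → ℝ) : ℝ :=
  (2 * π * σ2) ^ (-(Fintype.card ι : ℝ) / 2) * rexp (-(enorm2 x) ^ 2 / (2 * σ2))

lemma enorm2_sq (v : ι → ℝ) : enorm2 v ^ 2 = v ⬝ᵥ v := by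
  rw [enorm2, Real.sq_sqrt (by positivity), dotProduct]
  simp only [sq]

lemma gaussPiDens_pos (hσ : 0 < σ2) (x : ι → ℝ) : 0 < gaussPiDens ι σ2 x := by
  unfold gaussPiDens; positivity

lemma continuous_gaussPiDens : Continuous (gaussPiDens ι σ2) := by
  unfold gaussPiDens
  simp only [enorm2_sq]
  fun_prop

lemma gaussPi_eq_withDensity :
    gaussPi ι σ2 = volume.withDensity fun x => ENNReal.ofReal (gaussPiDens ι σ2 x) := rfl

lemma gaussPi_absolutelyContinuous : gaussPi ι σ2 ≪ volume :=
  withDensity_absolutelyContinuous _ _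

lemma absolutelyContinuous_gaussPi (hσ : 0 < σ2) : volume ≪ gaussPi ι σ2 :=
  withDensity_absolutelyContinuous' continuous_gaussPiDens.measurable.ennreal_ofReal.aemeasurable
    (Eventually.of_forall fun x => (ENNReal.ofReal_pos.2 (gaussPiDens_pos hσ x)).ne')

lemma integral_gaussPi (hσ : 0 < σ2) (f : (ι → ℝ) → ℂ) :
    ∫ x, f x ∂gaussPi ι σ2 = ∫ x, gaussPiDens ι σ2 x • f x := by
  rw [gaussPi_eq_withDensity, integral_withDensity_eq_integral_toReal_smul
      continuous_gaussPiDens.measurable.ennreal_ofReal (by simp)]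
  simp only [ENNReal.toReal_ofReal (gaussPiDens_pos hσ _).le]

lemma integral_cexp_gaussPi (hσ : 0 < σ2) (τ : ι → ℝ) :
    ∫ x, Complex.exp ((τ ⬝ᵥ x : ℝ) * I) ∂gaussPi ι σ2 =
      Complex.exp ((-(σ2 * (τ ⬝ᵥ τ)) / 2 : ℝ)) := by
  have hb : 0 < (((1 / (2 * σ2) : ℝ)) : ℂ).re := by
    rw [Complex.ofReal_re]; positivity
  have integrand (x : ι → ℝ) : gaussPiDens ι σ2 x • Complex.exp ((τ ⬝ᵥ x : ℝ) * I) =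
      ((2 * π * σ2) ^ (-(Fintype.card ι : ℝ) / 2) : ℝ) *
        Complex.exp (-(1 / (2 * σ2) : ℝ) * ∑ i, (x i : ℂ) ^ 2 + ∑ i, τ i * I * x i) := by
    rw [gaussPiDens, enorm2_sq, Complex.exp_add, Complex.real_smul, dotProduct, dotProduct]
    push_cast
    rw [mul_assoc, Finset.sum_mul]
    congr 3
    · ring_nf
    · exact Finset.sum_congr rfl fun i _ => by ring
  have normalization : (((2 * π * σ2) ^ (-(Fintype.card ι : ℝ) / 2) : ℝ) : ℂ) *
      (π / (1 / (2 * σ2) : ℝ)) ^ ((Fintype.card ι : ℂ) / 2) = 1 := by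
    have base : (π : ℂ) / (1 / (2 * σ2) : ℝ) = (2 * π * σ2 : ℝ) := by
      push_cast
      field_simp
    have hcpow := Complex.ofReal_cpow (x := 2 * π * σ2) (by positivity) (Fintype.card ι / 2 : ℝ)
    push_cast at hcpow base ⊢
    rw [base, ← hcpow, ← Complex.ofReal_mul, ← Real.rpow_add (by positivity)]
    simp [neg_div]
  have exponent : (∑ i, ((τ i : ℂ) * I) ^ 2) / (4 * (1 / (2 * σ2) : ℝ)) =
      (-(σ2 * (τ ⬝ᵥ τ)) / 2 : ℝ) := by
    have : (σ2 : ℂ) ≠ 0 := by exact_mod_cast hσ.ne'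
    simp only [mul_pow, Complex.I_sq, dotProduct, ← Finset.sum_mul]
    push_cast
    field_simp
    ring
  simp only [integral_gaussPi hσ, integrand, integral_const_mul]
  rw [GaussianFourier.integral_cexp_neg_mul_sum_add hb, ← mul_assoc, normalization, one_mul,
    exponent]

end Gaussian

section ChiSquare

variable {Ω : Type*} [MeasurableSpace Ω] {μ : Measure Ω} [IsProbabilityMeasure μ]

lemma sq_integral_abs_le_integral_sq {f : Ω → ℝ} (hf : MemLp f 2 μ) :
    (∫ x, |f x| ∂μ) ^ 2 ≤ ∫ x, f x ^ 2 ∂μ := by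
  have := ProbabilityTheory.variance_nonneg |f| μ
  rw [ProbabilityTheory.variance_eq_sub hf.abs] at this
  simpa using this

/-- `∫ L² dμ - 1` is the `χ²`-divergence. -/
lemma measureReal_withDensity_le_add_sqrt {L : Ω → ℝ} (hL : MemLp L 2 μ) (hL0 : 0 ≤ L)
    (hL1 : ∫ x, L x ∂μ = 1) {E : Set Ω} (hE : MeasurableSet E) :
    (μ.withDensity fun x => ENNReal.ofReal (L x)).real E ≤
      μ.real E + √(∫ x, L x ^ 2 ∂μ - 1) := by
  have hLi : Integrable L μ := hL.integrable one_le_two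
  have hdiff : MemLp (fun x => L x - 1) 2 μ := hL.sub (memLp_const 1)
  have hdiffi : Integrable (fun x => L x - 1) μ := hdiff.integrable one_le_two
  have hvar : ∫ x, (L x - 1) ^ 2 ∂μ = ∫ x, L x ^ 2 ∂μ - 1 := by
    have := ProbabilityTheory.variance_eq_sub hL
    rwa [ProbabilityTheory.variance_eq_integral hL.aemeasurable, hL1, one_pow] at this
  have hdensity : (μ.withDensity fun x => ENNReal.ofReal (L x)).real E = ∫ x in E, L x ∂μ := by
    rw [measureReal_def, withDensity_apply _ hE,
      ← ofReal_integral_eq_lintegral_ofReal hLi.integrableOn (Eventually.of_forall hL0),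
      ENNReal.toReal_ofReal (integral_nonneg hL0)]
  calc (μ.withDensity fun x => ENNReal.ofReal (L x)).real E
      = μ.real E + ∫ x in E, (L x - 1) ∂μ := by
        rw [hdensity, integral_sub hLi.integrableOn (integrable_const 1)]
        simp
    _ ≤ μ.real E + ∫ x in E, |L x - 1| ∂μ :=
        add_le_add le_rfl (setIntegral_mono hdiffi.integrableOn hdiffi.abs.integrableOn
          fun _ => le_abs_self _)
    _ ≤ μ.real E + ∫ x, |L x - 1| ∂μ :=
        add_le_add le_rfl (setIntegral_le_integral hdiffi.abs
          (Eventually.of_forall fun _ => abs_nonneg _))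
    _ ≤ μ.real E + √(∫ x, L x ^ 2 ∂μ - 1) := by
        gcongr
        exact Real.le_sqrt_of_sq_le (hvar ▸ sq_integral_abs_le_integral_sq hdiff)

end ChiSquare

section GaussianShift

variable {ι : Type*} [Fintype ι] {σ2 : ℝ}

lemma isProbabilityMeasure_gaussPi (hσ : 0 < σ2) : IsProbabilityMeasure (gaussPi ι σ2) := by
  have h := integral_cexp_gaussPi hσ (0 : ι → ℝ)
  simp only [zero_dotProduct, Complex.ofReal_zero, zero_mul, Complex.exp_zero, mul_zero, neg_zero,
    zero_div, integral_const, Complex.real_smul, mul_one] at h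
  have hreal : (gaussPi ι σ2).real Set.univ = 1 := by exact_mod_cast h
  exact ⟨(ENNReal.toReal_eq_one_iff _).1 hreal⟩

/-- The likelihood ratio of `N(w, σ² I)` with respect to `N(0, σ² I)`. -/
def shiftLikelihood (σ2 : ℝ) (w y : ι → ℝ) : ℝ := rexp ((w ⬝ᵥ y - w ⬝ᵥ w / 2) / σ2)

lemma continuous_shiftLikelihood (w : ι → ℝ) : Continuous (shiftLikelihood σ2 w) := by
  unfold shiftLikelihood
  fun_prop

lemma gaussPiDens_sub (hσ : 0 < σ2) (w y : ι → ℝ) :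
    gaussPiDens ι σ2 (y - w) = gaussPiDens ι σ2 y * shiftLikelihood σ2 w y := by
  unfold gaussPiDens shiftLikelihood
  rw [mul_assoc (_ ^ _), ← Real.exp_add]
  simp only [enorm2_sq, sub_dotProduct, dotProduct_sub, dotProduct_comm y w]
  congr 2
  field_simp
  ring

lemma shiftLikelihood_sq (w y : ι → ℝ) :
    shiftLikelihood σ2 w y ^ 2 =
      rexp ((w ⬝ᵥ w) / σ2) * shiftLikelihood σ2 ((2 : ℝ) • w) y := by
  unfold shiftLikelihood
  rw [← Real.exp_nat_mul, ← Real.exp_add]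
  simp only [smul_dotProduct, dotProduct_smul, smul_eq_mul]
  congr 1
  push_cast
  ring

lemma map_add_gaussPi (hσ : 0 < σ2) (w : ι → ℝ) :
    (gaussPi ι σ2).map (fun u => w + u) =
      (gaussPi ι σ2).withDensity fun y => ENNReal.ofReal (shiftLikelihood σ2 w y) := by
  have hdens : Measurable fun y => ENNReal.ofReal (gaussPiDens ι σ2 y) :=
    continuous_gaussPiDens.measurable.ennreal_ofReal
  have hlik : Measurable fun y => ENNReal.ofReal (shiftLikelihood σ2 w y) :=
    (continuous_shiftLikelihood w).measurable.ennreal_ofReal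
  ext E hE
  have hpre : MeasurableSet ((fun u => w + u) ⁻¹' E) := hE.preimage (by fun_prop)
  calc (gaussPi ι σ2).map (fun u => w + u) E
      = ∫⁻ u in (fun u => w + u) ⁻¹' E, ENNReal.ofReal (gaussPiDens ι σ2 u) := by
        rw [Measure.map_apply (by fun_prop) hE]
        exact withDensity_apply _ hpre
    _ = ∫⁻ y in E, ENNReal.ofReal (gaussPiDens ι σ2 (y - w)) := by
        rw [← (measurePreserving_add_left volume w).setLIntegral_comp_preimage hE (by
          exact hdens.comp (by fun_prop))]
        simp only [add_sub_cancel_left]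
    _ = ∫⁻ y in E, ENNReal.ofReal (gaussPiDens ι σ2 y) *
          ENNReal.ofReal (shiftLikelihood σ2 w y) := by
        simp only [gaussPiDens_sub hσ, ENNReal.ofReal_mul (gaussPiDens_pos hσ _).le]
    _ = _ := by
        rw [gaussPi_eq_withDensity, ← withDensity_mul _ hdens hlik, withDensity_apply _ hE]
        rfl

lemma integrable_shiftLikelihood (hσ : 0 < σ2) (w : ι → ℝ) :
    Integrable (shiftLikelihood σ2 w) (gaussPi ι σ2) ∧
      ∫ y, shiftLikelihood σ2 w y ∂gaussPi ι σ2 = 1 := by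
  have := isProbabilityMeasure_gaussPi (ι := ι) hσ
  have hmass : ∫⁻ y, ENNReal.ofReal (shiftLikelihood σ2 w y) ∂gaussPi ι σ2 = 1 := by
    rw [← setLIntegral_univ, ← withDensity_apply _ MeasurableSet.univ, ← map_add_gaussPi hσ,
      Measure.map_apply (by fun_prop) MeasurableSet.univ, Set.preimage_univ, measure_univ]
  have hmeas := (continuous_shiftLikelihood (σ2 := σ2) w).aestronglyMeasurable (μ := gaussPi ι σ2)
  have hpos : 0 ≤ᵐ[gaussPi ι σ2] shiftLikelihood σ2 w :=
    Eventually.of_forall fun y => (Real.exp_pos _).le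
  refine ⟨⟨hmeas, ?_⟩, ?_⟩
  · rw [hasFiniteIntegral_iff_ofReal hpos, hmass]
    exact ENNReal.one_lt_top
  · rw [integral_eq_lintegral_of_nonneg_ae hpos hmeas, hmass, ENNReal.toReal_one]

lemma measureReal_map_add_gaussPi_le (hσ : 0 < σ2) (w : ι → ℝ) {E : Set (ι → ℝ)}
    (hE : MeasurableSet E) :
    ((gaussPi ι σ2).map fun u => w + u).real E ≤
      (gaussPi ι σ2).real E + √(rexp ((w ⬝ᵥ w) / σ2) - 1) := by
  have := isProbabilityMeasure_gaussPi (ι := ι) hσ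
  have hsq : ∫ y, shiftLikelihood σ2 w y ^ 2 ∂gaussPi ι σ2 = rexp ((w ⬝ᵥ w) / σ2) := by
    simp only [shiftLikelihood_sq, integral_const_mul, (integrable_shiftLikelihood hσ _).2, mul_one]
  have hmem : MemLp (shiftLikelihood σ2 w) 2 (gaussPi ι σ2) := by
    rw [memLp_two_iff_integrable_sq (continuous_shiftLikelihood w).aestronglyMeasurable]
    simp only [shiftLikelihood_sq]
    exact (integrable_shiftLikelihood hσ _).1.const_mul _
  rw [map_add_gaussPi hσ, ← hsq]
  exact measureReal_withDensity_le_add_sqrt hmem (fun y => (Real.exp_pos _).le)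
    (integrable_shiftLikelihood hσ w).2 hE

lemma measureReal_map_add_gaussPi_le_map_add (hσ : 0 < σ2) (w w' : ι → ℝ) {E : Set (ι → ℝ)}
    (hE : MeasurableSet E) :
    ((gaussPi ι σ2).map fun u => w + u).real E ≤
      ((gaussPi ι σ2).map fun u => w' + u).real E +
        √(rexp (((w - w') ⬝ᵥ (w - w')) / σ2) - 1) := by
  have hshift : (gaussPi ι σ2).map (fun u => w + u) =
      ((gaussPi ι σ2).map fun u => (w - w') + u).map fun u => w' + u := by
    rw [Measure.map_map (by fun_prop) (by fun_prop)]
    congr 1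
    ext u i
    simp only [Function.comp_apply, Pi.add_apply, Pi.sub_apply]
    ring
  rw [hshift, map_measureReal_apply (by fun_prop) hE, map_measureReal_apply (by fun_prop) hE]
  exact measureReal_map_add_gaussPi_le hσ _ (hE.preimage (by fun_prop))

end GaussianShift

section MultivariateGaussian

open ProbabilityTheory
open Complex (I)

variable {ι κ : Type*} [Fintype ι] [Fintype κ] [DecidableEq κ] {σ2 : ℝ}

lemma map_mulVec_gaussPi (hσ : 0 < σ2) (M : Matrix κ ι ℝ) :
    (gaussPi ι σ2).map (fun u => WithLp.toLp 2 (M *ᵥ u)) =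
      multivariateGaussian 0 (σ2 • (M * Mᵀ)) := by
  have := isProbabilityMeasure_gaussPi (ι := ι) hσ
  have hmap : AEMeasurable (fun u => (WithLp.toLp 2 (M *ᵥ u) : EuclideanSpace ℝ κ))
      (gaussPi ι σ2) := Continuous.aemeasurable (by fun_prop)
  have := Measure.isProbabilityMeasure_map hmap
  have hcov : (σ2 • (M * Mᵀ)).PosSemidef := by
    simpa using (posSemidef_self_mul_conjTranspose M).smul hσ.le
  refine Measure.ext_of_charFun (funext fun τ => ?_)
  have hinner (u : ι → ℝ) :
      inner ℝ (WithLp.toLp 2 (M *ᵥ u) : EuclideanSpace ℝ κ) τ = (Mᵀ *ᵥ τ.ofLp) ⬝ᵥ u := by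
    rw [mulVec_transpose, ← dotProduct_mulVec]
    simp [PiLp.inner_apply, dotProduct]
  have hquad : τ.ofLp ⬝ᵥ ((M * Mᵀ) *ᵥ τ.ofLp) = (Mᵀ *ᵥ τ.ofLp) ⬝ᵥ (Mᵀ *ᵥ τ.ofLp) := by
    rw [← mulVec_mulVec, dotProduct_mulVec, ← mulVec_transpose]
  rw [charFun_multivariateGaussian hcov, charFun_apply, integral_map hmap (by fun_prop)]
  simp only [hinner, integral_cexp_gaussPi hσ, smul_mulVec, dotProduct_smul, hquad,
    inner_zero_right]
  congr 1
  push_cast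
  simp
  ring

lemma tendsto_multivariateGaussian {S : ℕ → Matrix κ κ ℝ} {S₀ : Matrix κ κ ℝ}
    (hS : ∀ n, (S n).PosSemidef) (hS₀ : S₀.PosSemidef) (hlim : Tendsto S atTop (𝓝 S₀))
    (μ : EuclideanSpace ℝ κ) :
    Tendsto (β := ProbabilityMeasure (EuclideanSpace ℝ κ))
      (fun n => ⟨multivariateGaussian μ (S n), inferInstance⟩) atTop
      (𝓝 ⟨multivariateGaussian μ S₀, inferInstance⟩) := by
  refine ProbabilityMeasure.tendsto_of_tendsto_charFun fun τ => ?_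
  simp only [ProbabilityMeasure.coe_mk, charFun_multivariateGaussian (hS _),
    charFun_multivariateGaussian hS₀]
  have hcont : Continuous fun B : Matrix κ κ ℝ =>
      Complex.exp (inner ℝ τ μ * I - (τ.ofLp ⬝ᵥ B *ᵥ τ.ofLp : ℝ) / 2) := by
    fun_prop
  exact (hcont.tendsto S₀).comp hlim

lemma exists_isUnit_det_mul_transpose_eq {S : Matrix κ κ ℝ} (hS : S.PosDef) :
    ∃ A : Matrix κ κ ℝ, IsUnit A.det ∧ A * Aᵀ = S := by
  open scoped MatrixOrder in
  obtain ⟨B, hB⟩ := CStarAlgebra.nonneg_iff_eq_star_mul_self.mp hS.posSemidef.nonneg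
  have hBS : Bᵀ * B = S := by
    rw [hB, star_eq_conjTranspose, conjTranspose_eq_transpose_of_trivial]
  refine ⟨Bᵀ, isUnit_iff_ne_zero.2 fun h => ?_, by rw [transpose_transpose, hBS]⟩
  have := hS.det_pos
  simp [← hBS, h] at this

lemma exists_continuousLinearEquiv_map_gaussPi {S : Matrix κ κ ℝ} (hS : S.PosDef) :
    ∃ e : (κ → ℝ) ≃L[ℝ] EuclideanSpace ℝ κ,
      (gaussPi κ 1).map e = multivariateGaussian 0 S := by
  obtain ⟨A, hA, hAS⟩ := exists_isUnit_det_mul_transpose_eq hS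
  refine ⟨(A.toLinearEquiv' (A.invertibleOfIsUnitDet hA)).toContinuousLinearEquiv.trans
    (EuclideanSpace.equiv κ ℝ).symm, ?_⟩
  rw [← hAS, ← one_smul ℝ (A * Aᵀ), ← map_mulVec_gaussPi one_pos A]
  rfl

lemma multivariateGaussian_absolutelyContinuous {S : Matrix κ κ ℝ} (hS : S.PosDef) :
    multivariateGaussian 0 S ≪ volume := by
  obtain ⟨e, he⟩ := exists_continuousLinearEquiv_map_gaussPi hS
  have := e.isAddHaarMeasure_map (volume : Measure (κ → ℝ))
  rw [← he]
  exact (gaussPi_absolutelyContinuous.map e.continuous.measurable).trans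
    (Measure.absolutelyContinuous_isAddHaarMeasure _ _)

lemma isOpenPosMeasure_multivariateGaussian {S : Matrix κ κ ℝ} (hS : S.PosDef) :
    (multivariateGaussian 0 S).IsOpenPosMeasure := by
  obtain ⟨e, he⟩ := exists_continuousLinearEquiv_map_gaussPi hS
  have := e.isAddHaarMeasure_map (volume : Measure (κ → ℝ))
  rw [← he]
  exact ((absolutelyContinuous_gaussPi one_pos).map e.continuous.measurable).isOpenPosMeasure

end MultivariateGaussian

section Minimax

/-- The minimax probability, over all real-valued measurable functions `G` of the data, of missing
the target `F γ` by more than `δ` when the data follow the law `P γ`. -/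
def minimaxDeviation {Γ Ω : Type*} [MeasurableSpace Ω] (P : Γ → Measure Ω) (F : Γ → ℝ) (δ : ℝ) :
    ℝ≥0∞ :=
  ⨅ G : Ω → ℝ, ⨅ (_ : Measurable G), ⨆ γ, P γ {y | δ < |G y - F γ|}

lemma ofReal_half_sub_le_minimaxDeviation {Γ Ω : Type*} [MeasurableSpace Ω] {P : Γ → Measure Ω}
    [∀ γ, IsProbabilityMeasure (P γ)] {F : Γ → ℝ} {δ ε : ℝ} {a b : Γ}
    (hsep : 2 * δ < |F a - F b|)
    (hclose : ∀ E, MeasurableSet E → (P a).real E ≤ (P b).real E + ε) :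
    ENNReal.ofReal ((1 - ε) / 2) ≤ minimaxDeviation P F δ := by
  refine le_iInf₂ fun G hG => ?_
  have hmiss (γ : Γ) : MeasurableSet {y | δ < |G y - F γ|} :=
    measurableSet_lt measurable_const (hG.sub_const _).norm
  have hcover : {y | δ < |G y - F a|} ∪ {y | δ < |G y - F b|} = Set.univ := by
    refine Set.eq_univ_of_forall fun y => ?_
    by_contra hy
    simp only [Set.mem_union, Set.mem_ofPred_eq, not_or, not_lt] at hy
    have := abs_sub_le (F a) (G y) (F b)
    rw [abs_sub_comm (F a) (G y)] at this
    linarith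
  have hmass : 1 ≤ (P a).real {y | δ < |G y - F a|} + (P b).real {y | δ < |G y - F b|} + ε := by
    have hunion := measureReal_union_le (μ := P a) {y | δ < |G y - F a|} {y | δ < |G y - F b|}
    rw [hcover, probReal_univ] at hunion
    linarith [hclose _ (hmiss b)]
  rcases le_total ((1 - ε) / 2) ((P a).real {y | δ < |G y - F a|}) with ha | ha
  · exact (ENNReal.ofReal_le_of_le_toReal ha).trans
      (le_iSup (fun γ => P γ {y | δ < |G y - F γ|}) a)
  · exact (ENNReal.ofReal_le_of_le_toReal (by rw [← measureReal_def]; linarith)).trans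
      (le_iSup (fun γ => P γ {y | δ < |G y - F γ|}) b)

lemma exists_frequently_ne_of_ne {Γ α : Type*} [TopologicalSpace Γ] [PreconnectedSpace Γ]
    {φ : Γ → α} {a b : Γ} (hab : φ a ≠ φ b) : ∃ γ, ∃ᶠ γ' in 𝓝 γ, φ γ ≠ φ γ' := by
  by_contra! h
  have hloc : IsLocallyConstant φ :=
    (IsLocallyConstant.iff_eventually_eq φ).2 fun γ => by
      simpa [eq_comm] using h γ
  exact hab (hloc.apply_eq_of_preconnectedSpace a b)

/-- Connectedness is what brings two different values of `φ` to arbitrarily close, hence nearly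
indistinguishable, parameters. -/
theorem half_le_iSup_liminf_minimaxDeviation {Γ N : Type*} [TopologicalSpace Γ]
    [PreconnectedSpace Γ] {l : Filter N} {Ω : N → Type*} [∀ n, MeasurableSpace (Ω n)]
    {P : ∀ n, Γ → Measure (Ω n)} [∀ n γ, IsProbabilityMeasure (P n γ)] {F : N → Γ → ℝ} {φ : Γ → ℝ}
    (hF : ∀ γ, Tendsto (fun n => F n γ) l (𝓝 (φ γ)))
    (hP : ∀ γ, ∀ ε > 0, ∀ᶠ γ' in 𝓝 γ, ∀ᶠ n in l,
      ∀ E, MeasurableSet E → (P n γ).real E ≤ (P n γ').real E + ε)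
    {a b : Γ} (hφ : φ a ≠ φ b) :
    (1 / 2 : ℝ≥0∞) ≤
      ⨆ δ : ℝ, ⨆ (_ : 0 < δ), liminf (fun n => minimaxDeviation (P n) (F n) δ) l := by
  obtain ⟨γ, hγ⟩ := exists_frequently_ne_of_ne hφ
  have bound (ε : ℝ) (hε : 0 < ε) : ENNReal.ofReal ((1 - ε) / 2) ≤
      ⨆ δ : ℝ, ⨆ (_ : 0 < δ), liminf (fun n => minimaxDeviation (P n) (F n) δ) l := by
    obtain ⟨γ', hne, hclose⟩ := (hγ.and_eventually (hP γ ε hε)).exists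
    have hgap : 0 < |φ γ - φ γ'| := abs_pos.2 (sub_ne_zero.2 hne)
    refine le_iSup₂_of_le (|φ γ - φ γ'| / 3) (by positivity)
      (le_liminf_of_le (by isBoundedDefault) ?_)
    have hsep : ∀ᶠ n in l, 2 * (|φ γ - φ γ'| / 3) < |F n γ - F n γ'| :=
      ((hF γ).sub (hF γ')).abs.eventually_const_lt (by linarith)
    filter_upwards [hsep, hclose] with n hn hE
    exact ofReal_half_sub_le_minimaxDeviation hn hE
  have hlim : Tendsto (fun ε : ℝ => ENNReal.ofReal ((1 - ε) / 2)) (𝓝[>] 0) (𝓝 (1 / 2)) := by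
    have hcont : Continuous fun ε : ℝ => ENNReal.ofReal ((1 - ε) / 2) :=
      ENNReal.continuous_ofReal.comp (by fun_prop)
    have := (hcont.tendsto 0).mono_left (nhdsWithin_le_nhds (s := Set.Ioi 0))
    simpa [ENNReal.ofReal_inv_of_pos] using this
  exact le_of_tendsto hlim (eventually_nhdsWithin_of_forall bound)

end Minimax

section SchurComplement

variable {m p : Type*} [Fintype m] [DecidableEq m]

/-- The Schur complement `q₂₂ - q₂₁ q₁₁⁻¹ q₁₂` of the upper left block of `q`. -/
def schurComplement (q : Matrix (m ⊕ p) (m ⊕ p) ℝ) : Matrix p p ℝ :=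
  q.toBlocks₂₂ - q.toBlocks₂₁ * q.toBlocks₁₁⁻¹ * q.toBlocks₁₂

/-- The matrix `C` for which `x - C x₂` is the orthogonal projection, in the inner product given by
`q`, of `x` onto the vectors whose second block vanishes. -/
def residualMatrix [DecidableEq p] (q : Matrix (m ⊕ p) (m ⊕ p) ℝ) : Matrix (m ⊕ p) p ℝ :=
  fromRows (-(q.toBlocks₁₁⁻¹ * q.toBlocks₁₂)) 1

lemma sub_residualMatrix_mulVec [Fintype p] [DecidableEq p] (q : Matrix (m ⊕ p) (m ⊕ p) ℝ)
    (x : m ⊕ p → ℝ) :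
    x - residualMatrix q *ᵥ (x ∘ Sum.inr) =
      Sum.elim (x ∘ Sum.inl + (q.toBlocks₁₁⁻¹ * q.toBlocks₁₂) *ᵥ (x ∘ Sum.inr)) 0 := by
  funext i
  cases i <;> simp [residualMatrix, fromRows_mulVec, neg_mulVec]

lemma dotProduct_mulVec_eq_add_schurComplement [Fintype p] [DecidableEq p]
    {q : Matrix (m ⊕ p) (m ⊕ p) ℝ} (hq : q.IsHermitian) (hdet : IsUnit q.toBlocks₁₁.det)
    (x : m ⊕ p → ℝ) :
    x ⬝ᵥ q *ᵥ x = (x - residualMatrix q *ᵥ (x ∘ Sum.inr)) ⬝ᵥ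
        q *ᵥ (x - residualMatrix q *ᵥ (x ∘ Sum.inr)) +
      (x ∘ Sum.inr) ⬝ᵥ schurComplement q *ᵥ (x ∘ Sum.inr) := by
  have := q.toBlocks₁₁.invertibleOfIsUnitDet hdet
  have hblocks : (fromBlocks q.toBlocks₁₁ q.toBlocks₁₂ q.toBlocks₂₁ q.toBlocks₂₂).IsHermitian := by
    rwa [fromBlocks_toBlocks]
  obtain ⟨h₁₁, h₁₂, -, -⟩ := isHermitian_fromBlocks_iff.1 hblocks
  have schur (y : m → ℝ) (z : p → ℝ) : Sum.elim y z ⬝ᵥ q *ᵥ Sum.elim y z =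
      (y + (q.toBlocks₁₁⁻¹ * q.toBlocks₁₂) *ᵥ z) ⬝ᵥ
        q.toBlocks₁₁ *ᵥ (y + (q.toBlocks₁₁⁻¹ * q.toBlocks₁₂) *ᵥ z) +
      z ⬝ᵥ schurComplement q *ᵥ z := by
    have := schur_complement_eq₁₁ q.toBlocks₁₂ q.toBlocks₂₂ y z h₁₁
    rw [h₁₂, fromBlocks_toBlocks] at this
    simpa only [star_trivial, dotProduct_mulVec, schurComplement] using this
  rw [sub_residualMatrix_mulVec, schur, ← Sum.elim_comp_inl_inr x, schur]
  simp

lemma inv_toBlocks₁₁_mulVec_inl [Fintype p] {q : Matrix (m ⊕ p) (m ⊕ p) ℝ}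
    (hdet : IsUnit q.toBlocks₁₁.det) (v : m ⊕ p → ℝ) :
    q.toBlocks₁₁⁻¹ *ᵥ ((q *ᵥ v) ∘ Sum.inl) =
      v ∘ Sum.inl + (q.toBlocks₁₁⁻¹ * q.toBlocks₁₂) *ᵥ (v ∘ Sum.inr) := by
  have hq : (q *ᵥ v) ∘ Sum.inl =
      q.toBlocks₁₁ *ᵥ (v ∘ Sum.inl) + q.toBlocks₁₂ *ᵥ (v ∘ Sum.inr) := by
    conv_lhs => rw [← fromBlocks_toBlocks q, fromBlocks_mulVec, Sum.elim_comp_inl]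
  rw [hq, mulVec_add, mulVec_mulVec, nonsing_inv_mul _ hdet, one_mulVec, mulVec_mulVec]

lemma isUnit_det_toBlocks₁₁ {q : Matrix (m ⊕ p) (m ⊕ p) ℝ} (hq : q.PosDef) :
    IsUnit q.toBlocks₁₁.det :=
  (isUnit_iff_isUnit_det _).1 (hq.submatrix Sum.inl_injective).isUnit

lemma posSemidef_schurComplement [Finite p] {q : Matrix (m ⊕ p) (m ⊕ p) ℝ} (hq : q.PosDef) :
    (schurComplement q).PosSemidef := by
  have := Fintype.ofFinite p
  have h₁₁ : q.toBlocks₁₁.PosDef := hq.submatrix Sum.inl_injective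
  have := h₁₁.isUnit.invertible
  have h₂₁ : q.toBlocks₁₂ᴴ = q.toBlocks₂₁ := by
    ext i j
    exact hq.isHermitian.apply (Sum.inr i) (Sum.inl j)
  rw [schurComplement, ← h₂₁, ← h₁₁.fromBlocks₁₁, h₂₁, fromBlocks_toBlocks]
  exact hq.posSemidef

lemma inv_smul_of_ne_zero {c : ℝ} (hc : c ≠ 0) {A : Matrix m m ℝ} (hA : IsUnit A.det) :
    (c • A)⁻¹ = c⁻¹ • A⁻¹ :=
  A.inv_smul' (Units.mk0 c hc) hA

lemma schurComplement_smul {c : ℝ} (hc : c ≠ 0) {q : Matrix (m ⊕ p) (m ⊕ p) ℝ}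
    (hdet : IsUnit q.toBlocks₁₁.det) : schurComplement (c • q) = c • schurComplement q := by
  change c • q.toBlocks₂₂ - c • q.toBlocks₂₁ * (c • q.toBlocks₁₁)⁻¹ * c • q.toBlocks₁₂ = _
  rw [inv_smul_of_ne_zero hc hdet, schurComplement]
  simp [smul_sub, smul_smul, hc]

lemma residualMatrix_smul [DecidableEq p] {c : ℝ} (hc : c ≠ 0) {q : Matrix (m ⊕ p) (m ⊕ p) ℝ}
    (hdet : IsUnit q.toBlocks₁₁.det) : residualMatrix (c • q) = residualMatrix q := by
  change fromRows (-((c • q.toBlocks₁₁)⁻¹ * c • q.toBlocks₁₂)) 1 = _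
  rw [inv_smul_of_ne_zero hc hdet, residualMatrix]
  simp [smul_smul, hc]

lemma tendsto_inv_matrix {N : Type*} {l : Filter N} {q : N → Matrix m m ℝ} {q₀ : Matrix m m ℝ}
    (hq : Tendsto q l (𝓝 q₀)) (hdet : IsUnit q₀.det) : Tendsto (fun n => (q n)⁻¹) l (𝓝 q₀⁻¹) :=
  (continuousAt_matrix_inv q₀ (NormedRing.inverse_continuousAt hdet.unit)).tendsto.comp hq

lemma tendsto_inv_toBlocks₁₁ {N : Type*} {l : Filter N} {q : N → Matrix (m ⊕ p) (m ⊕ p) ℝ}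
    {q₀ : Matrix (m ⊕ p) (m ⊕ p) ℝ} (hq : Tendsto q l (𝓝 q₀)) (hdet : IsUnit q₀.toBlocks₁₁.det) :
    Tendsto (fun n => (q n).toBlocks₁₁⁻¹) l (𝓝 q₀.toBlocks₁₁⁻¹) :=
  tendsto_inv_matrix (((continuous_id.matrix_submatrix Sum.inl Sum.inl).tendsto q₀).comp hq) hdet

lemma tendsto_schurComplement {N : Type*} {l : Filter N} {q : N → Matrix (m ⊕ p) (m ⊕ p) ℝ}
    {q₀ : Matrix (m ⊕ p) (m ⊕ p) ℝ} (hq : Tendsto q l (𝓝 q₀)) (hdet : IsUnit q₀.toBlocks₁₁.det) :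
    Tendsto (fun n => schurComplement (q n)) l (𝓝 (schurComplement q₀)) := by
  have hcont : Continuous fun x : Matrix (m ⊕ p) (m ⊕ p) ℝ × Matrix m m ℝ =>
      x.1.toBlocks₂₂ - x.1.toBlocks₂₁ * x.2 * x.1.toBlocks₁₂ :=
    (continuous_fst.matrix_submatrix Sum.inr Sum.inr).sub
      (((continuous_fst.matrix_submatrix Sum.inr Sum.inl).matrix_mul continuous_snd).matrix_mul
        (continuous_fst.matrix_submatrix Sum.inl Sum.inr))
  exact (hcont.tendsto _).comp (hq.prodMk_nhds (tendsto_inv_toBlocks₁₁ hq hdet))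

lemma tendsto_residualMatrix [DecidableEq p] {N : Type*} {l : Filter N}
    {q : N → Matrix (m ⊕ p) (m ⊕ p) ℝ} {q₀ : Matrix (m ⊕ p) (m ⊕ p) ℝ} (hq : Tendsto q l (𝓝 q₀))
    (hdet : IsUnit q₀.toBlocks₁₁.det) :
    Tendsto (fun n => residualMatrix (q n)) l (𝓝 (residualMatrix q₀)) := by
  have hcont : Continuous fun x : Matrix (m ⊕ p) (m ⊕ p) ℝ × Matrix m m ℝ =>
      x.2 * x.1.toBlocks₁₂ :=
    continuous_snd.matrix_mul (continuous_fst.matrix_submatrix Sum.inl Sum.inr)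
  have hcoeff := (hcont.tendsto _).comp (hq.prodMk_nhds (tendsto_inv_toBlocks₁₁ hq hdet))
  refine tendsto_pi_nhds.2 fun i => tendsto_pi_nhds.2 fun j => ?_
  cases i with
  | inl a => exact (tendsto_pi_nhds.1 (tendsto_pi_nhds.1 hcoeff a) j).neg
  | inr b => exact tendsto_const_nhds

end SchurComplement

section Averaging

/-- The weight `λ̂` of the restricted model in terms of the scaled unrestricted estimator `ξ` of the
second block of coefficients, when `S` is the Schur complement of the scaled Gram matrix. -/
def averagingWeight {p : Type*} [Fintype p] (α σ2 : ℝ) (S : Matrix p p ℝ) (ξ : p → ℝ) : ℝ :=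
  Real.sigmoid (α * (2 * Fintype.card p - ξ ⬝ᵥ S *ᵥ ξ / σ2))

/-- The scaled error `√n (β̃ - ϑ)` of the averaging estimator as a function of the scaled error `w`
of the unrestricted estimator and of `γ = √n ϑ₂`, see `sqrt_smul_mavg_sub`. -/
def averagingMap {m p : Type*} [Fintype p] (α σ2 : ℝ) (S : Matrix p p ℝ) (C : Matrix (m ⊕ p) p ℝ)
    (γ : p → ℝ) (w : m ⊕ p → ℝ) : m ⊕ p → ℝ :=
  w - averagingWeight α σ2 S (w ∘ Sum.inr + γ) • C *ᵥ (w ∘ Sum.inr + γ)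

lemma continuous_averagingWeight {p : Type*} [Fintype p] (α σ2 : ℝ) :
    Continuous fun x : Matrix p p ℝ × (p → ℝ) => averagingWeight α σ2 x.1 x.2 :=
  continuous_sigmoid.comp (by fun_prop)

lemma continuous_averagingMap {m p : Type*} [Fintype p] (α σ2 : ℝ) :
    Continuous fun x : (Matrix p p ℝ × Matrix (m ⊕ p) p ℝ × (p → ℝ)) × (m ⊕ p → ℝ) =>
      averagingMap α σ2 x.1.1 x.1.2.1 x.1.2.2 x.2 := by
  have hξ : Continuous fun x : (Matrix p p ℝ × Matrix (m ⊕ p) p ℝ × (p → ℝ)) × (m ⊕ p → ℝ) =>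
      x.2 ∘ Sum.inr + x.1.2.2 := by
    fun_prop
  have hweight := (continuous_averagingWeight α σ2).comp
    ((continuous_fst.comp continuous_fst).prodMk hξ)
  exact continuous_snd.sub (hweight.smul
    ((continuous_fst.comp (continuous_snd.comp continuous_fst)).matrix_mulVec hξ))

lemma continuous_averagingMap_right {m p : Type*} [Fintype p] (α σ2 : ℝ) (S : Matrix p p ℝ)
    (C : Matrix (m ⊕ p) p ℝ) (γ : p → ℝ) : Continuous (averagingMap α σ2 S C γ) :=
  (continuous_averagingMap α σ2).comp (by fun_prop : Continuous fun w => ((S, C, γ), w))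

variable {X : Matrix (Fin n) (Fin k₁ ⊕ Fin k₂) ℝ}

lemma betaR_eq_betaU_sub (hdet : IsUnit (Xᵀ * X).det) (hdet₁ : IsUnit (Xᵀ * X).toBlocks₁₁.det)
    (Y : Fin n → ℝ) :
    betaR X Y = betaU X Y - residualMatrix (Xᵀ * X) *ᵥ (betaU X Y ∘ Sum.inr) := by
  have hnormal : (Xᵀ * X) *ᵥ betaU X Y = Xᵀ *ᵥ Y := by
    rw [betaU, mulVec_mulVec, mul_nonsing_inv _ hdet, one_mulVec]
  have hproj := inv_toBlocks₁₁_mulVec_inl hdet₁ (betaU X Y)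
  rw [hnormal] at hproj
  rw [sub_residualMatrix_mulVec, ← hproj]
  rfl

lemma rR_sub_rU (hdet : IsUnit (Xᵀ * X).det) (hdet₁ : IsUnit (Xᵀ * X).toBlocks₁₁.det) (σ2 : ℝ)
    (Y : Fin n → ℝ) :
    rR X σ2 Y - rU X σ2 Y =
      (betaU X Y ∘ Sum.inr) ⬝ᵥ schurComplement (Xᵀ * X) *ᵥ (betaU X Y ∘ Sum.inr) -
        2 * σ2 * k₂ := by
  have hG : (Xᵀ * X).IsHermitian := isHermitian_conjTranspose_mul_self X
  rw [rR, rU, dotProduct_mulVec_eq_add_schurComplement hG hdet₁ (betaU X Y),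
    ← betaR_eq_betaU_sub hdet hdet₁]
  ring

lemma lamHat_eq_averagingWeight (hdet : IsUnit (Xᵀ * X).det)
    (hdet₁ : IsUnit (Xᵀ * X).toBlocks₁₁.det) (α : ℝ) {σ2 : ℝ} (hσ : σ2 ≠ 0) (Y : Fin n → ℝ) :
    lamHat α σ2 X Y = averagingWeight α σ2 (schurComplement (Xᵀ * X)) (betaU X Y ∘ Sum.inr) := by
  have hexponent : α * (2 * Fintype.card (Fin k₂) - (betaU X Y ∘ Sum.inr) ⬝ᵥ
      schurComplement (Xᵀ * X) *ᵥ (betaU X Y ∘ Sum.inr) / σ2) =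
      -(α * rR X σ2 Y) / σ2 - -(α * rU X σ2 Y) / σ2 := by
    rw [Fintype.card_fin, eq_add_of_sub_eq (rR_sub_rU hdet hdet₁ σ2 Y)]
    field_simp
    ring
  rw [averagingWeight, hexponent, lamHat, Real.sigmoid_def, neg_sub, Real.exp_sub]
  field_simp

lemma mavg_eq (hdet : IsUnit (Xᵀ * X).det) (hdet₁ : IsUnit (Xᵀ * X).toBlocks₁₁.det) (α : ℝ)
    {σ2 : ℝ} (hσ : σ2 ≠ 0) (Y : Fin n → ℝ) :
    mavg α σ2 X Y = averagingMap α σ2 (schurComplement (Xᵀ * X)) (residualMatrix (Xᵀ * X)) 0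
      (betaU X Y) := by
  rw [averagingMap, add_zero, mavg, lamHat_eq_averagingWeight hdet hdet₁ α hσ,
    betaR_eq_betaU_sub hdet hdet₁]
  module

lemma continuous_mavg (hdet : IsUnit (Xᵀ * X).det) (hdet₁ : IsUnit (Xᵀ * X).toBlocks₁₁.det) (α : ℝ)
    {σ2 : ℝ} (hσ : σ2 ≠ 0) : Continuous (mavg α σ2 X) := by
  have hbetaU : Continuous (betaU X) := by
    unfold betaU
    fun_prop
  rw [funext (mavg_eq hdet hdet₁ α hσ)]
  exact (continuous_averagingMap_right ..).comp hbetaU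

lemma betaU_mulVec_add (hdet : IsUnit (Xᵀ * X).det) (ϑ : Fin k₁ ⊕ Fin k₂ → ℝ) (u : Fin n → ℝ) :
    betaU X (X *ᵥ ϑ + u) = ϑ + ((Xᵀ * X)⁻¹ * Xᵀ) *ᵥ u := by
  rw [betaU, mulVec_add, mulVec_add, mulVec_mulVec, mulVec_mulVec, Matrix.mul_assoc,
    nonsing_inv_mul _ hdet, one_mulVec, mulVec_mulVec]

lemma averagingWeight_smul {p : Type*} [Fintype p] (α σ2 c : ℝ) (S : Matrix p p ℝ) (ξ : p → ℝ) :
    averagingWeight α σ2 S (c • ξ) = averagingWeight α σ2 (c ^ 2 • S) ξ := by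
  simp only [averagingWeight, mulVec_smul, smul_mulVec, dotProduct_smul, smul_dotProduct,
    smul_eq_mul, sq, mul_assoc]

lemma sqrt_smul_mavg_sub (hn : 0 < n) (hdet : IsUnit (Xᵀ * X).det)
    (hdet₁ : IsUnit (Xᵀ * X).toBlocks₁₁.det) (α : ℝ) {σ2 : ℝ} (hσ : σ2 ≠ 0)
    (ϑ : Fin k₁ ⊕ Fin k₂ → ℝ) (u : Fin n → ℝ) :
    √n • (mavg α σ2 X (X *ᵥ ϑ + u) - ϑ) =
      averagingMap α σ2 (schurComplement ((n : ℝ)⁻¹ • (Xᵀ * X)))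
        (residualMatrix ((n : ℝ)⁻¹ • (Xᵀ * X))) (√n • (ϑ ∘ Sum.inr))
        ((√n • ((Xᵀ * X)⁻¹ * Xᵀ)) *ᵥ u) := by
  have hn' : (n : ℝ) ≠ 0 := by positivity
  have hξ : ((√n • ((Xᵀ * X)⁻¹ * Xᵀ)) *ᵥ u) ∘ Sum.inr + √n • (ϑ ∘ Sum.inr) =
      √n • (betaU X (X *ᵥ ϑ + u) ∘ Sum.inr) := by
    rw [betaU_mulVec_add hdet, smul_mulVec]
    funext j
    simp [mul_add, add_comm]
  rw [mavg_eq hdet hdet₁ α hσ, averagingMap, averagingMap, add_zero, hξ, averagingWeight_smul,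
    Real.sq_sqrt n.cast_nonneg, schurComplement_smul (inv_ne_zero hn') hdet₁, smul_inv_smul₀ hn',
    residualMatrix_smul (inv_ne_zero hn') hdet₁, mulVec_smul, smul_mulVec,
    smul_comm (averagingWeight _ _ _ _), ← sub_eq_of_eq_add' (betaU_mulVec_add hdet ϑ u)]
  module

end Averaging

section WeakConvergence

lemma tendsto_map_probabilityMeasure_of_continuous {N A E F : Type*} {l : Filter N}
    [TopologicalSpace A] [SecondCountableTopology A] [TopologicalSpace.PseudoMetrizableSpace A]
    [TopologicalSpace E] [SecondCountableTopology E] [TopologicalSpace.PseudoMetrizableSpace E]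
    [MeasurableSpace E] [BorelSpace E] [TopologicalSpace F] [MeasurableSpace F] [BorelSpace F]
    {ν : N → ProbabilityMeasure E} {ν₀ : ProbabilityMeasure E} (hν : Tendsto ν l (𝓝 ν₀))
    {a : N → A} {a₀ : A} (ha : Tendsto a l (𝓝 a₀)) {g : A × E → F} (hg : Continuous g) :
    Tendsto (fun n => (ν n).map (f := fun x => g (a n, x))
        (hg.comp (by fun_prop : Continuous (Prod.mk (a n)))).aemeasurable) l
      (𝓝 (ν₀.map (f := fun x => g (a₀, x))
        (hg.comp (by fun_prop : Continuous (Prod.mk a₀))).aemeasurable)) := by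
  borelize A
  have hprod := (ProbabilityMeasure.continuous_prod (α := A) (β := E)).tendsto (diracProba a₀, ν₀)
    |>.comp (((continuous_diracProba (X := A)).tendsto a₀ |>.comp ha).prodMk_nhds hν)
  have hmap (b : A) (μ : ProbabilityMeasure E) :
      ((diracProba b).prod μ).map hg.aemeasurable =
        μ.map (f := fun x => g (b, x))
          (hg.comp (by fun_prop : Continuous (Prod.mk b))).aemeasurable := by
    refine Subtype.ext ?_
    change ((Measure.dirac b).prod (μ : Measure E)).map g = _
    rw [Measure.dirac_prod, Measure.map_map hg.measurable measurable_prodMk_left]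
    rfl
  simpa only [Function.comp_def, hmap] using
    ProbabilityMeasure.tendsto_map_of_tendsto_of_continuous _ _ hprod hg

lemma frontier_Iic_pi_subset {ι : Type*} [Finite ι] (t : ι → ℝ) :
    frontier (Set.Iic t) ⊆ ⋃ i, {x | x i = t i} := by
  rw [isClosed_Iic.frontier_eq]
  rintro x ⟨hx, hint⟩
  by_contra hne
  have hopen : IsOpen (Set.univ.pi fun i => Set.Iio (t i)) :=
    isOpen_set_pi Set.finite_univ fun i _ => isOpen_Iio
  refine hint (mem_interior.2 ⟨_, fun y hy i => (hy i trivial).le, hopen, fun i _ => ?_⟩)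
  exact (hx i).lt_of_ne fun h => hne (Set.mem_iUnion.2 ⟨i, h⟩)

lemma tendsto_measureReal_Iic {N ι : Type*} [Finite ι] {l : Filter N}
    {ν : N → ProbabilityMeasure (ι → ℝ)} {ν₀ : ProbabilityMeasure (ι → ℝ)}
    (hν : Tendsto ν l (𝓝 ν₀)) {t : ι → ℝ} (ht : ∀ i, (ν₀ : Measure (ι → ℝ)) {x | x i = t i} = 0) :
    Tendsto (fun n => (ν n : Measure (ι → ℝ)).real (Set.Iic t)) l
      (𝓝 ((ν₀ : Measure (ι → ℝ)).real (Set.Iic t))) :=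
  (ENNReal.tendsto_toReal (measure_ne_top _ _)).comp
    (ProbabilityMeasure.tendsto_measure_of_null_frontier_of_tendsto' hν
      (measure_mono_null (frontier_Iic_pi_subset t) (measure_iUnion_null ht)))

end WeakConvergence

section AveragingLaw

open ProbabilityTheory

variable {m p : Type*} [Fintype p]

lemma measurable_averagingMap_ofLp [Finite m] (α σ2 : ℝ) (S : Matrix p p ℝ) (C : Matrix (m ⊕ p) p ℝ)
    (γ : p → ℝ) :
    Measurable fun w : EuclideanSpace ℝ (m ⊕ p) => averagingMap α σ2 S C γ w.ofLp :=
  ((continuous_averagingMap_right α σ2 S C γ).comp (by fun_prop)).measurable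

variable [Fintype m] [DecidableEq m] [DecidableEq p]

/-- The law of the scaled error `√n (β̃ - ϑ)` when `√n ϑ₂ = γ` and the scaled Gram matrix is `q`. At
the limit of the scaled Gram matrices this is the asymptotic distribution `limitLaw`, parametrised
by the `N(0, σ² q⁻¹)` variable instead of two independent standardised ones. -/
def averagingLaw (α σ2 : ℝ) (q : Matrix (m ⊕ p) (m ⊕ p) ℝ) (γ : p → ℝ) : Measure (m ⊕ p → ℝ) :=
  (multivariateGaussian 0 (σ2 • q⁻¹)).map fun w =>
    averagingMap α σ2 (schurComplement q) (residualMatrix q) γ w.ofLp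

instance isProbabilityMeasure_averagingLaw (α σ2 : ℝ) (q : Matrix (m ⊕ p) (m ⊕ p) ℝ) (γ : p → ℝ) :
    IsProbabilityMeasure (averagingLaw α σ2 q γ) :=
  Measure.isProbabilityMeasure_map (measurable_averagingMap_ofLp ..).aemeasurable

lemma tendsto_averagingLaw (α : ℝ) {σ2 : ℝ} (hσ : 0 ≤ σ2) {q : ℕ → Matrix (m ⊕ p) (m ⊕ p) ℝ}
    {Q : Matrix (m ⊕ p) (m ⊕ p) ℝ} (hq : ∀ n, (q n).PosSemidef) (hQ : Q.PosDef)
    (hlim : Tendsto q atTop (𝓝 Q)) {γ : ℕ → p → ℝ} {γ₀ : p → ℝ}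
    (hγ : Tendsto γ atTop (𝓝 γ₀)) :
    Tendsto (β := ProbabilityMeasure (m ⊕ p → ℝ))
      (fun n => ⟨averagingLaw α σ2 (q n) (γ n), inferInstance⟩) atTop
      (𝓝 ⟨averagingLaw α σ2 Q γ₀, inferInstance⟩) := by
  have : SecondCountableTopology (Matrix p p ℝ) :=
    inferInstanceAs (SecondCountableTopology (p → p → ℝ))
  have : SecondCountableTopology (Matrix (m ⊕ p) p ℝ) :=
    inferInstanceAs (SecondCountableTopology (m ⊕ p → p → ℝ))
  have : TopologicalSpace.PseudoMetrizableSpace (Matrix p p ℝ) :=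
    inferInstanceAs (TopologicalSpace.PseudoMetrizableSpace (p → p → ℝ))
  have : TopologicalSpace.PseudoMetrizableSpace (Matrix (m ⊕ p) p ℝ) :=
    inferInstanceAs (TopologicalSpace.PseudoMetrizableSpace (m ⊕ p → p → ℝ))
  have hinv : Tendsto (fun n => σ2 • (q n)⁻¹) atTop (𝓝 (σ2 • Q⁻¹)) :=
    (tendsto_inv_matrix hlim ((isUnit_iff_isUnit_det _).1 hQ.isUnit)).const_smul σ2
  have hgauss := tendsto_multivariateGaussian (fun n => (hq n).inv.smul hσ)
    (hQ.posSemidef.inv.smul hσ) hinv 0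
  have hparam := (tendsto_schurComplement hlim (isUnit_det_toBlocks₁₁ hQ)).prodMk_nhds
    ((tendsto_residualMatrix hlim (isUnit_det_toBlocks₁₁ hQ)).prodMk_nhds hγ)
  exact tendsto_map_probabilityMeasure_of_continuous hgauss hparam
    ((continuous_averagingMap α σ2).comp
      (continuous_fst.prodMk ((PiLp.continuous_ofLp 2 _).comp continuous_snd)))

lemma map_mavg_Pmeas (hn : 0 < n) {X : Matrix (Fin n) (Fin k₁ ⊕ Fin k₂) ℝ} (hX : (Xᵀ * X).PosDef)
    (α : ℝ) {σ2 : ℝ} (hσ : 0 < σ2) (ϑ : Fin k₁ ⊕ Fin k₂ → ℝ) :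
    (Pmeas X ϑ σ2).map (fun Y => √n • (mavg α σ2 X Y - ϑ)) =
      averagingLaw α σ2 ((n : ℝ)⁻¹ • (Xᵀ * X)) (√n • (ϑ ∘ Sum.inr)) := by
  have hdet := (isUnit_iff_isUnit_det _).1 hX.isUnit
  have hdet₁ := isUnit_det_toBlocks₁₁ hX
  have hn' : (n : ℝ) ≠ 0 := by positivity
  have hcov : (√n • ((Xᵀ * X)⁻¹ * Xᵀ)) * (√n • ((Xᵀ * X)⁻¹ * Xᵀ))ᵀ =
      ((n : ℝ)⁻¹ • (Xᵀ * X))⁻¹ := by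
    rw [inv_smul_of_ne_zero (inv_ne_zero hn') hdet, inv_inv, transpose_smul, Matrix.smul_mul,
      Matrix.mul_smul, smul_smul, Real.mul_self_sqrt n.cast_nonneg, transpose_mul,
      transpose_transpose, Matrix.mul_assoc, ← Matrix.mul_assoc Xᵀ, transpose_nonsing_inv,
      transpose_mul, transpose_transpose, mul_nonsing_inv _ hdet, Matrix.mul_one]
  have hmavg : Continuous fun Y => √n • (mavg α σ2 X Y - ϑ) := by
    have := continuous_mavg hdet hdet₁ α hσ.ne'
    fun_prop
  rw [averagingLaw, ← hcov, ← map_mulVec_gaussPi hσ,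
    Measure.map_map (measurable_averagingMap_ofLp ..)
      (Continuous.measurable (by fun_prop : Continuous fun u => WithLp.toLp 2 (_ *ᵥ u))),
    Pmeas, Measure.map_map hmavg.measurable (by fun_prop)]
  exact congrArg₂ _ (funext (sqrt_smul_mavg_sub hn hdet hdet₁ α hσ.ne' ϑ)) rfl

end AveragingLaw

section LimitLaw

open scoped Pointwise

open ProbabilityTheory

lemma addHaar_eq_zero_of_smul_notMem {E : Type*} [NormedAddCommGroup E] [NormedSpace ℝ E]
    [MeasurableSpace E] [BorelSpace E] [FiniteDimensional ℝ E] (μ : Measure E)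
    [μ.IsAddHaarMeasure] {A : Set E} (hA : MeasurableSet A)
    (hray : ∀ x ∈ A, ∀ r : ℝ, 1 < r → r • x ∉ A) : μ A = 0 := by
  have hdisj : Pairwise (Function.onFun Disjoint fun s : ℝ => Real.exp s • A) := by
    refine (pairwise_disjoint_on _).2 fun r s hrs => Set.disjoint_left.2 ?_
    rintro _ ⟨x, hx, rfl⟩ ⟨y, hy, hxy⟩
    refine hray y hy (Real.exp (s - r)) (Real.one_lt_exp_iff.2 (sub_pos.2 hrs)) ?_
    have : Real.exp (s - r) • y = x := by
      rw [Real.exp_sub, div_eq_inv_mul, mul_smul, inv_smul_eq_iff₀ (Real.exp_ne_zero r)]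
      exact hxy
    rwa [this]
  have hcount := Measure.countable_meas_pos_of_disjoint_iUnion (μ := μ)
    (fun s => hA.const_smul₀ (Real.exp s)) hdisj
  by_contra hpos
  have huniv : {s : ℝ | 0 < μ (Real.exp s • A)} = Set.univ := by
    refine Set.eq_univ_of_forall fun s => ?_
    rw [Set.mem_ofPred_eq, Measure.addHaar_smul]
    exact ENNReal.mul_pos (ENNReal.ofReal_pos.2 (by positivity)).ne' hpos
  rw [huniv, Set.countable_univ_iff] at hcount
  exact not_countable hcount

lemma measureReal_lt_of_isOpen_subset_sdiff {E : Type*} [TopologicalSpace E] [MeasurableSpace E]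
    [OpensMeasurableSpace E] {μ : Measure E} [IsFiniteMeasure μ] [μ.IsOpenPosMeasure]
    {A B U : Set E} (hAB : A ⊆ B) (hU : IsOpen U) (hne : U.Nonempty) (hUB : U ⊆ B \ A) :
    μ.real A < μ.real B := by
  have hdisj : Disjoint A U := (Set.disjoint_sdiff_right (s := A)).mono_right hUB
  calc μ.real A < μ.real A + μ.real U :=
        lt_add_of_pos_right _ (ENNReal.toReal_pos (hU.measure_pos μ hne).ne' (measure_ne_top μ U))
    _ = μ.real (A ∪ U) := (measureReal_union hdisj hU.measurableSet).symm
    _ ≤ μ.real B := measureReal_mono (Set.union_subset hAB (hUB.trans Set.sdiff_subset))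

variable {m p : Type*} [Fintype p] {α σ2 : ℝ} {S : Matrix p p ℝ}

lemma averagingWeight_pos (ξ : p → ℝ) : 0 < averagingWeight α σ2 S ξ :=
  Real.sigmoid_pos _

lemma averagingWeight_lt_one (ξ : p → ℝ) : averagingWeight α σ2 S ξ < 1 :=
  Real.sigmoid_lt_one _

lemma averagingWeight_smul_le (hα : 0 ≤ α) (hσ : 0 ≤ σ2) (hS : S.PosSemidef) {r : ℝ} (hr : 1 ≤ r)
    (ξ : p → ℝ) : averagingWeight α σ2 S (r • ξ) ≤ averagingWeight α σ2 S ξ := by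
  have hquad : 0 ≤ ξ ⬝ᵥ S *ᵥ ξ := hS.dotProduct_mulVec_nonneg ξ
  rw [averagingWeight, averagingWeight, Real.sigmoid_strictMono.le_iff_le, mulVec_smul,
    dotProduct_smul, smul_dotProduct, smul_smul, smul_eq_mul]
  gcongr
  exact le_mul_of_one_le_left hquad (one_le_mul_of_one_le_of_one_le hr hr)

variable [Fintype m]

lemma volume_one_sub_averagingWeight_mul_eq (hα : 0 ≤ α) (hσ : 0 ≤ σ2) (hS : S.PosSemidef) (j : p)
    (c : ℝ) :
    volume {x : m ⊕ p → ℝ |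
      (1 - averagingWeight α σ2 S (x ∘ Sum.inr)) * x (Sum.inr j) = c} = 0 := by
  rcases eq_or_ne c 0 with rfl | hc
  · refine measure_mono_null (fun x hx => ?_)
      (Measure.pi_hyperplane (fun _ : m ⊕ p => (volume : Measure ℝ)) (Sum.inr j) 0)
    exact (mul_eq_zero.1 hx).resolve_left (sub_pos.2 (averagingWeight_lt_one _)).ne'
  refine addHaar_eq_zero_of_smul_notMem volume ?_ fun x hx r hr hrx => ?_
  · have : Measurable fun x : m ⊕ p → ℝ => averagingWeight α σ2 S (x ∘ Sum.inr) :=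
      ((continuous_averagingWeight α σ2).comp
        (by fun_prop : Continuous fun x : m ⊕ p → ℝ => (S, x ∘ Sum.inr))).measurable
    exact measurableSet_eq_fun (by fun_prop) measurable_const
  · have hxj : x (Sum.inr j) ≠ 0 := fun h0 => hc (hx.symm.trans (by rw [h0, mul_zero]))
    have hgrow : 1 - averagingWeight α σ2 S (x ∘ Sum.inr) <
        (1 - averagingWeight α σ2 S (r • x ∘ Sum.inr)) * r :=
      calc 1 - averagingWeight α σ2 S (x ∘ Sum.inr)
          < (1 - averagingWeight α σ2 S (x ∘ Sum.inr)) * r :=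
            lt_mul_of_one_lt_right (sub_pos.2 (averagingWeight_lt_one _)) hr
        _ ≤ (1 - averagingWeight α σ2 S (r • x ∘ Sum.inr)) * r := by
            gcongr
            exact averagingWeight_smul_le hα hσ hS hr.le _
    refine hgrow.ne (mul_right_cancel₀ hxj ?_)
    rw [mul_assoc]
    exact hx.trans hrx.symm

variable [DecidableEq m] [DecidableEq p] {Q : Matrix (m ⊕ p) (m ⊕ p) ℝ}

lemma averagingMap_inl (hQ12 : Q.toBlocks₁₂ = 0) (γ : p → ℝ) (w : m ⊕ p → ℝ) (a : m) :
    averagingMap α σ2 S (residualMatrix Q) γ w (Sum.inl a) = w (Sum.inl a) := by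
  simp [averagingMap, residualMatrix, hQ12, fromRows_mulVec]

lemma averagingMap_inr (γ : p → ℝ) (w : m ⊕ p → ℝ) (j : p) :
    averagingMap α σ2 S (residualMatrix Q) γ w (Sum.inr j) =
      (1 - averagingWeight α σ2 S (w ∘ Sum.inr + γ)) * (w (Sum.inr j) + γ j) - γ j := by
  simp only [averagingMap, residualMatrix, fromRows_mulVec, Pi.sub_apply, Pi.smul_apply,
    Sum.elim_inr, one_mulVec, Pi.add_apply, Function.comp_apply, smul_eq_mul]
  ring

lemma volume_averagingMap_eq (hα : 0 ≤ α) (hσ : 0 ≤ σ2) (hS : S.PosSemidef)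
    (hQ12 : Q.toBlocks₁₂ = 0) (γ : p → ℝ) (i : m ⊕ p) (c : ℝ) :
    volume {w | averagingMap α σ2 S (residualMatrix Q) γ w i = c} = 0 := by
  cases i with
  | inl a =>
    simp only [averagingMap_inl hQ12]
    exact Measure.pi_hyperplane (fun _ : m ⊕ p => (volume : Measure ℝ)) (Sum.inl a) c
  | inr j =>
    have := volume_one_sub_averagingWeight_mul_eq (m := m) hα hσ hS j (c + γ j)
    rw [← measure_preimage_add_right _ (Sum.elim 0 γ : m ⊕ p → ℝ)] at this
    refine measure_mono_null (fun w hw => ?_) this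
    rw [Set.mem_ofPred_eq, averagingMap_inr, sub_eq_iff_eq_add] at hw
    exact hw

lemma averagingLaw_eq_null (hα : 0 ≤ α) (hσ : 0 < σ2) (hQ : Q.PosDef) (hQ12 : Q.toBlocks₁₂ = 0)
    (γ : p → ℝ) (i : m ⊕ p) (c : ℝ) : averagingLaw α σ2 Q γ {x | x i = c} = 0 := by
  rw [averagingLaw, Measure.map_apply (measurable_averagingMap_ofLp ..)
    (measurableSet_eq_fun (measurable_pi_apply i) measurable_const)]
  refine multivariateGaussian_absolutelyContinuous (hQ.inv.smul hσ) ?_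
  exact (PiLp.volume_preserving_ofLp (m ⊕ p)).quasiMeasurePreserving.preimage_null
    (volume_averagingMap_eq hα hσ.le (posSemidef_schurComplement hQ) hQ12 γ i c)

lemma preimage_averagingMap_neg (hQ12 : Q.toBlocks₁₂ = 0) (t : m ⊕ p → ℝ) :
    averagingMap α σ2 S (residualMatrix Q) (-(t ∘ Sum.inr)) ⁻¹' Set.Iic t = Set.Iic t := by
  ext w
  simp only [Set.mem_preimage, Set.mem_Iic, Pi.le_def, Sum.forall, averagingMap_inl hQ12,
    averagingMap_inr, Pi.neg_apply, Function.comp_apply]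
  refine and_congr_right fun _ => forall_congr' fun j => ?_
  have hpos : 0 < 1 - averagingWeight α σ2 S (w ∘ Sum.inr + -(t ∘ Sum.inr)) :=
    sub_pos.2 (averagingWeight_lt_one _)
  rw [sub_neg_eq_add, add_le_iff_nonpos_left, ← smul_eq_mul,
    smul_nonpos_iff_nonpos_of_pos_left hpos, ← sub_eq_add_neg, sub_nonpos]

lemma Iic_subset_preimage_averagingMap (hQ12 : Q.toBlocks₁₂ = 0) (t : m ⊕ p → ℝ) :
    Set.Iic t ⊆ averagingMap α σ2 S (residualMatrix Q) (1 - t ∘ Sum.inr) ⁻¹' Set.Iic t := by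
  intro w hw
  simp only [Set.mem_preimage, Set.mem_Iic, Pi.le_def, Sum.forall, averagingMap_inl hQ12,
    averagingMap_inr, Pi.sub_apply, Pi.one_apply, Function.comp_apply] at hw ⊢
  refine ⟨hw.1, fun j => ?_⟩
  have hpos := averagingWeight_pos (α := α) (σ2 := σ2) (S := S) (w ∘ Sum.inr + (1 - t ∘ Sum.inr))
  have hlt := averagingWeight_lt_one (α := α) (σ2 := σ2) (S := S)
    (w ∘ Sum.inr + (1 - t ∘ Sum.inr))
  nlinarith [hw.2 j]

lemma exists_isOpen_subset_preimage_averagingMap_sdiff_Iic [Nonempty p] (hQ12 : Q.toBlocks₁₂ = 0)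
    (t : m ⊕ p → ℝ) :
    ∃ U : Set (m ⊕ p → ℝ), IsOpen U ∧ U.Nonempty ∧
      U ⊆ averagingMap α σ2 S (residualMatrix Q) (1 - t ∘ Sum.inr) ⁻¹' Set.Iic t \ Set.Iic t := by
  obtain ⟨j⟩ := ‹Nonempty p›
  set T := averagingMap α σ2 S (residualMatrix Q) (1 - t ∘ Sum.inr) with hT
  have hTcont : Continuous T := continuous_averagingMap_right ..
  have hstrict : T (Sum.elim (t ∘ Sum.inl - 1) (t ∘ Sum.inr)) ∈
      Set.univ.pi fun i => Set.Iio (t i) := by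
    rintro (a | i) -
    · simp [hT, averagingMap_inl hQ12]
    · simp [hT, averagingMap_inr, averagingWeight_pos]
  have hopen : IsOpen (T ⁻¹' Set.univ.pi fun i => Set.Iio (t i)) :=
    (isOpen_set_pi Set.finite_univ fun i _ => isOpen_Iio).preimage hTcont
  have hline : Continuous fun s : ℝ =>
      (Sum.elim (t ∘ Sum.inl - 1) (t ∘ Sum.inr) + s • 1 : m ⊕ p → ℝ) := by
    fun_prop
  have hnear : ∀ᶠ s : ℝ in 𝓝[>] 0,
      Sum.elim (t ∘ Sum.inl - 1) (t ∘ Sum.inr) + s • 1 ∈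
        T ⁻¹' Set.univ.pi fun i => Set.Iio (t i) :=
    (hline.tendsto 0).eventually_mem (hopen.mem_nhds (by simpa using hstrict))
      |>.filter_mono nhdsWithin_le_nhds
  obtain ⟨s, hs, hspos⟩ := (hnear.and self_mem_nhdsWithin).exists
  refine ⟨_, hopen.inter (isOpen_lt (f := fun _ => t (Sum.inr j)) continuous_const
    (continuous_apply (Sum.inr j))),
    ⟨Sum.elim (t ∘ Sum.inl - 1) (t ∘ Sum.inr) + s • 1, hs, by simpa using hspos⟩,
    fun w hw => ⟨fun i => (hw.1 i trivial).le, fun h => ?_⟩⟩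
  exact (h (Sum.inr j)).not_gt hw.2

lemma averagingLaw_Iic_lt [Nonempty p] (hσ : 0 < σ2) (hQ : Q.PosDef) (hQ12 : Q.toBlocks₁₂ = 0)
    (t : m ⊕ p → ℝ) :
    (averagingLaw α σ2 Q (-(t ∘ Sum.inr))).real (Set.Iic t) <
      (averagingLaw α σ2 Q (1 - t ∘ Sum.inr)).real (Set.Iic t) := by
  have := isOpenPosMeasure_multivariateGaussian (hQ.inv.smul hσ)
  obtain ⟨U, hU, hne, hUsub⟩ := exists_isOpen_subset_preimage_averagingMap_sdiff_Iic
    (α := α) (σ2 := σ2) (S := schurComplement Q) hQ12 t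
  have hofLp : Continuous (WithLp.ofLp : EuclideanSpace ℝ (m ⊕ p) → m ⊕ p → ℝ) :=
    PiLp.continuous_ofLp 2 _
  rw [averagingLaw, averagingLaw, map_measureReal_apply (measurable_averagingMap_ofLp ..)
    measurableSet_Iic, map_measureReal_apply (measurable_averagingMap_ofLp ..) measurableSet_Iic]
  refine measureReal_lt_of_isOpen_subset_sdiff (fun w hw => ?_) (hU.preimage hofLp)
    (hne.preimage (WithLp.ofLp_surjective 2)) fun w hw => ?_
  · exact Iic_subset_preimage_averagingMap hQ12 t ((preimage_averagingMap_neg hQ12 t).le hw)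
  · exact ⟨(hUsub hw).1, fun h => (hUsub hw).2 ((preimage_averagingMap_neg hQ12 t).le h)⟩

end LimitLaw

section LocalParameters

lemma enorm2_ofLp {ι : Type*} [Fintype ι] (x : EuclideanSpace ℝ ι) : enorm2 x.ofLp = ‖x‖ := by
  simp only [enorm2, EuclideanSpace.norm_eq, Real.norm_eq_abs, sq_abs]

lemma eventually_posDef_of_tendsto {ι N : Type*} [Finite ι] {l : Filter N}
    {q : N → Matrix ι ι ℝ} {Q : Matrix ι ι ℝ} (hq : ∀ n, (q n).PosSemidef) (hQ : Q.PosDef)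
    (hlim : Tendsto q l (𝓝 Q)) : ∀ᶠ n in l, (q n).PosDef := by
  classical
  have := Fintype.ofFinite ι
  have hdet : Tendsto (fun n => (q n).det) l (𝓝 Q.det) :=
    (Continuous.matrix_det continuous_id).tendsto Q |>.comp hlim
  filter_upwards [hdet.eventually_ne hQ.det_pos.ne'] with n hn
  exact (hq n).posDef_iff_det_ne_zero.2 hn

/-- The local alternative `β + h / √n`. -/
def localParam {ι : Type*} (n : ℕ) (β h : ι → ℝ) : ι → ℝ := β + (√n)⁻¹ • h

lemma enorm2_localParam_sub_lt {ι : Type*} [Fintype ι] (hn : 0 < n) (β : ι → ℝ)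
    {h : EuclideanSpace ℝ ι} {ρ : ℝ} (hh : ‖h‖ < ρ) :
    enorm2 (localParam n β h.ofLp - β) < ρ / √n := by
  have hn' : 0 < √(n : ℝ) := by positivity
  rw [localParam, add_sub_cancel_left, ← WithLp.ofLp_smul, enorm2_ofLp, norm_smul, norm_inv,
    Real.norm_of_nonneg hn'.le, inv_mul_eq_div]
  gcongr

lemma minimaxDeviation_localParam_le {ι Ω : Type*} [Fintype ι] [MeasurableSpace Ω] (hn : 0 < n)
    (β : ι → ℝ) (ρ : ℝ) (P : (ι → ℝ) → Measure Ω) (F : (ι → ℝ) → ℝ) (δ : ℝ) :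
    minimaxDeviation (fun h : Metric.ball (0 : EuclideanSpace ℝ ι) ρ => P (localParam n β h.1.ofLp))
        (fun h => F (localParam n β h.1.ofLp)) δ ≤
      ⨅ G : Ω → ℝ, ⨅ (_ : Measurable G), ⨆ ϑ : ι → ℝ, ⨆ (_ : enorm2 (ϑ - β) < ρ / √n),
        P ϑ {y | δ < |G y - F ϑ|} :=
  iInf₂_mono fun _ _ => iSup_le fun h => le_iSup₂_of_le (localParam n β h.1.ofLp)
    (enorm2_localParam_sub_lt hn β (mem_ball_zero_iff.1 h.2)) le_rfl

lemma sqrt_smul_localParam_comp {ι κ : Type*} (hn : 0 < n) {f : κ → ι} {β : ι → ℝ}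
    (hβ : β ∘ f = 0) (h : ι → ℝ) : √n • (localParam n β h ∘ f) = h ∘ f := by
  have hn' : √(n : ℝ) ≠ 0 := by positivity
  rw [localParam, Pi.add_comp, hβ, zero_add, Pi.smul_comp, smul_inv_smul₀ hn']

lemma mulVec_localParam_sub_dotProduct_self {ι : Type*} [Fintype ι] (X : Matrix (Fin n) ι ℝ)
    (β h h' : ι → ℝ) :
    (X *ᵥ localParam n β h - X *ᵥ localParam n β h') ⬝ᵥ
        (X *ᵥ localParam n β h - X *ᵥ localParam n β h') =
      (h - h') ⬝ᵥ ((n : ℝ)⁻¹ • (Xᵀ * X)) *ᵥ (h - h') := by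
  rw [← mulVec_sub, localParam, localParam, add_sub_add_left_eq_sub, ← smul_sub, mulVec_smul,
    smul_dotProduct, dotProduct_smul, smul_smul, ← mul_inv, Real.mul_self_sqrt n.cast_nonneg,
    smul_mulVec, dotProduct_smul, ← mulVec_mulVec, dotProduct_mulVec _ Xᵀ, vecMul_transpose]

lemma isProbabilityMeasure_Pmeas (X : Matrix (Fin n) (Fin k₁ ⊕ Fin k₂) ℝ)
    (ϑ : Fin k₁ ⊕ Fin k₂ → ℝ) {σ2 : ℝ} (hσ : 0 < σ2) : IsProbabilityMeasure (Pmeas X ϑ σ2) :=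
  have := isProbabilityMeasure_gaussPi (ι := Fin n) hσ
  Measure.isProbabilityMeasure_map (by fun_prop)

lemma eventually_measureReal_Pmeas_localParam_le {σ2 : ℝ} (hσ : 0 < σ2)
    {X : ∀ n, Matrix (Fin n) (Fin k₁ ⊕ Fin k₂) ℝ}
    {Q : Matrix (Fin k₁ ⊕ Fin k₂) (Fin k₁ ⊕ Fin k₂) ℝ}
    (hlim : Tendsto (fun n : ℕ => (n : ℝ)⁻¹ • ((X n)ᵀ * X n)) atTop (𝓝 Q))
    (β h : Fin k₁ ⊕ Fin k₂ → ℝ) {ε : ℝ} (hε : 0 < ε) :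
    ∀ᶠ h' in 𝓝 h, ∀ᶠ n in atTop, ∀ E, MeasurableSet E →
      (Pmeas (X n) (localParam n β h) σ2).real E ≤
        (Pmeas (X n) (localParam n β h') σ2).real E + ε := by
  let D (q : Matrix (Fin k₁ ⊕ Fin k₂) (Fin k₁ ⊕ Fin k₂) ℝ) (h' : Fin k₁ ⊕ Fin k₂ → ℝ) : ℝ :=
    √(rexp (((h - h') ⬝ᵥ q *ᵥ (h - h')) / σ2) - 1)
  have hDQ : Continuous fun h' => D Q h' := by fun_prop
  have hDh : D Q h = 0 := by simp [D]
  filter_upwards [(hDQ.tendsto h).eventually_lt_const (hDh.trans_lt hε)] with h' hh'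
  have hDq : Continuous fun q => D q h' := by fun_prop
  filter_upwards [((hDq.tendsto Q).comp hlim).eventually_lt_const hh'] with n hn E hE
  calc (Pmeas (X n) (localParam n β h) σ2).real E
      ≤ (Pmeas (X n) (localParam n β h') σ2).real E + D ((n : ℝ)⁻¹ • ((X n)ᵀ * X n)) h' := by
        simpa only [Pmeas, D, mulVec_localParam_sub_dotProduct_self] using
          measureReal_map_add_gaussPi_le_map_add hσ (X n *ᵥ localParam n β h)
            (X n *ᵥ localParam n β h') hE
    _ ≤ _ := by gcongr; exact hn.le

/-- The distribution function `F_{n,ϑ,σ}` of the scaled estimation error `√n (β̃ - ϑ)`. -/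
def mavgCdf (α σ2 : ℝ) (X : Matrix (Fin n) (Fin k₁ ⊕ Fin k₂) ℝ) (ϑ t : Fin k₁ ⊕ Fin k₂ → ℝ) : ℝ :=
  (Pmeas X ϑ σ2 {Y | ∀ i, √n * (mavg α σ2 X Y i - ϑ i) ≤ t i}).toReal

lemma mavgCdf_eq_averagingLaw (hn : 0 < n) {X : Matrix (Fin n) (Fin k₁ ⊕ Fin k₂) ℝ}
    (hX : (Xᵀ * X).PosDef) (α : ℝ) {σ2 : ℝ} (hσ : 0 < σ2) (ϑ t : Fin k₁ ⊕ Fin k₂ → ℝ) :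
    mavgCdf α σ2 X ϑ t =
      (averagingLaw α σ2 ((n : ℝ)⁻¹ • (Xᵀ * X)) (√n • (ϑ ∘ Sum.inr))).real (Set.Iic t) := by
  have hmavg : Continuous fun Y => √n • (mavg α σ2 X Y - ϑ) := by
    have := continuous_mavg ((isUnit_iff_isUnit_det _).1 hX.isUnit) (isUnit_det_toBlocks₁₁ hX) α
      hσ.ne'
    fun_prop
  rw [← map_mavg_Pmeas hn hX α hσ, map_measureReal_apply hmavg.measurable measurableSet_Iic]
  rfl

lemma tendsto_mavgCdf_localParam {α σ2 : ℝ} (hα : 0 ≤ α) (hσ : 0 < σ2)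
    {X : ∀ n, Matrix (Fin n) (Fin k₁ ⊕ Fin k₂) ℝ}
    {Q : Matrix (Fin k₁ ⊕ Fin k₂) (Fin k₁ ⊕ Fin k₂) ℝ} (hQ : Q.PosDef) (hQ12 : Q.toBlocks₁₂ = 0)
    (hlim : Tendsto (fun n : ℕ => (n : ℝ)⁻¹ • ((X n)ᵀ * X n)) atTop (𝓝 Q))
    {β : Fin k₁ ⊕ Fin k₂ → ℝ} (hβ : β ∘ Sum.inr = 0) (h t : Fin k₁ ⊕ Fin k₂ → ℝ) :
    Tendsto (fun n => mavgCdf α σ2 (X n) (localParam n β h) t) atTop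
      (𝓝 ((averagingLaw α σ2 Q (h ∘ Sum.inr)).real (Set.Iic t))) := by
  have hgram (n : ℕ) : ((n : ℝ)⁻¹ • ((X n)ᵀ * X n)).PosSemidef :=
    (posSemidef_conjTranspose_mul_self (X n)).smul (by positivity)
  refine (tendsto_measureReal_Iic
    (tendsto_averagingLaw α hσ.le hgram hQ hlim (tendsto_const_nhds (x := h ∘ Sum.inr)))
    fun i => averagingLaw_eq_null hα hσ hQ hQ12 _ i (t i)).congr' ?_
  filter_upwards [eventually_posDef_of_tendsto hgram hQ hlim, eventually_gt_atTop 0] with n hpos hn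
  have hX : ((X n)ᵀ * X n).PosDef := by
    have := hpos.smul (Nat.cast_pos.2 hn : (0 : ℝ) < n)
    rwa [smul_inv_smul₀ (by positivity)] at this
  rw [mavgCdf_eq_averagingLaw hn hX α hσ, sqrt_smul_localParam_comp hn hβ]
  rfl

lemma half_le_iSup_liminf_minimaxDeviation_localParam {α σ2 : ℝ} (hα : 0 ≤ α) (hσ : 0 < σ2)
    {X : ∀ n, Matrix (Fin n) (Fin k₁ ⊕ Fin k₂) ℝ}
    {Q : Matrix (Fin k₁ ⊕ Fin k₂) (Fin k₁ ⊕ Fin k₂) ℝ} (hQ : Q.PosDef) (hQ12 : Q.toBlocks₁₂ = 0)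
    (hlim : Tendsto (fun n : ℕ => (n : ℝ)⁻¹ • ((X n)ᵀ * X n)) atTop (𝓝 Q))
    {β : Fin k₁ ⊕ Fin k₂ → ℝ} (hβ : β ∘ Sum.inr = 0) (t : Fin k₁ ⊕ Fin k₂ → ℝ) {ρ : ℝ}
    {a b : Metric.ball (0 : EuclideanSpace ℝ (Fin k₁ ⊕ Fin k₂)) ρ}
    (hab : (averagingLaw α σ2 Q (a.1.ofLp ∘ Sum.inr)).real (Set.Iic t) ≠
      (averagingLaw α σ2 Q (b.1.ofLp ∘ Sum.inr)).real (Set.Iic t)) :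
    1 / 2 ≤ ⨆ δ, ⨆ (_ : 0 < δ), liminf (fun n : ℕ => minimaxDeviation
      (fun h : Metric.ball (0 : EuclideanSpace ℝ (Fin k₁ ⊕ Fin k₂)) ρ =>
        Pmeas (X n) (localParam n β h.1.ofLp) σ2)
      (fun h => mavgCdf α σ2 (X n) (localParam n β h.1.ofLp) t) δ) atTop := by
  have := Subtype.preconnectedSpace
    (convex_ball (0 : EuclideanSpace ℝ (Fin k₁ ⊕ Fin k₂)) ρ).isPreconnected
  have hprob (n : ℕ) (h : Metric.ball (0 : EuclideanSpace ℝ (Fin k₁ ⊕ Fin k₂)) ρ) :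
      IsProbabilityMeasure (Pmeas (X n) (localParam n β h.1.ofLp) σ2) :=
    isProbabilityMeasure_Pmeas (X n) _ hσ
  have hofLp : Continuous fun h : Metric.ball (0 : EuclideanSpace ℝ (Fin k₁ ⊕ Fin k₂)) ρ =>
      h.1.ofLp :=
    (PiLp.continuous_ofLp 2 _).comp continuous_subtype_val
  exact half_le_iSup_liminf_minimaxDeviation
    (fun h => tendsto_mavgCdf_localParam hα hσ hQ hQ12 hlim hβ h.1.ofLp t)
    (fun h ε hε => hofLp.continuousAt.eventually
      (eventually_measureReal_Pmeas_localParam_le hσ hlim β h.1.ofLp hε)) hab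

end LocalParameters

theorem statement13_general {k₁ k₂ : ℕ} (hk₂ : 0 < k₂)
    (X : ∀ n : ℕ, Matrix (Fin n) (Fin k₁ ⊕ Fin k₂) ℝ)
    (Q : Matrix (Fin k₁ ⊕ Fin k₂) (Fin k₁ ⊕ Fin k₂) ℝ) (hQ : Q.PosDef)
    (hQ12 : Q.toBlocks₁₂ = 0)
    (hlim : Tendsto (fun n : ℕ => (n : ℝ)⁻¹ • ((X n)ᵀ * X n)) atTop (𝓝 Q))
    (σ α : ℝ) (hσ : 0 < σ) (hα : 0 ≤ α) (t : (Fin k₁ ⊕ Fin k₂) → ℝ) :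
    ∃ ρ₀ : ℝ, 0 < ρ₀ ∧
      ∀ β : (Fin k₁ ⊕ Fin k₂) → ℝ, β ∘ Sum.inr = 0 →
        (1 / 2 : ℝ≥0∞) ≤ ⨆ δ : ℝ, ⨆ (_ : 0 < δ),
          Filter.liminf (fun n : ℕ =>
              ⨅ G : (Fin n → ℝ) → ℝ, ⨅ (_ : Measurable G),
                ⨆ ϑ : (Fin k₁ ⊕ Fin k₂) → ℝ,
                  ⨆ (_ : enorm2 (ϑ - β) < ρ₀ / Real.sqrt n),
                  Pmeas (X n) ϑ (σ ^ 2) {Y | δ < |G Y - mavgCdf α (σ ^ 2) (X n) ϑ t|})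
            atTop := by
  have : NeZero k₂ := ⟨hk₂.ne'⟩
  have hσ2 : 0 < σ ^ 2 := by positivity
  let a : EuclideanSpace ℝ (Fin k₁ ⊕ Fin k₂) := .toLp 2 (Sum.elim 0 (-(t ∘ Sum.inr)))
  let b : EuclideanSpace ℝ (Fin k₁ ⊕ Fin k₂) := .toLp 2 (Sum.elim 0 (1 - t ∘ Sum.inr))
  have ha : ‖a‖ < max ‖a‖ ‖b‖ + 1 := (le_max_left ..).trans_lt (lt_add_one _)
  have hb : ‖b‖ < max ‖a‖ ‖b‖ + 1 := (le_max_right ..).trans_lt (lt_add_one _)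
  refine ⟨max ‖a‖ ‖b‖ + 1, by positivity, fun β hβ => ?_⟩
  refine (half_le_iSup_liminf_minimaxDeviation_localParam hα hσ2 hQ hQ12 hlim hβ t
    (a := ⟨a, mem_ball_zero_iff.2 ha⟩) (b := ⟨b, mem_ball_zero_iff.2 hb⟩)
    (averagingLaw_Iic_lt hσ2 hQ hQ12 t).ne).trans ?_
  refine iSup₂_mono fun δ _ => liminf_le_liminf ?_
  filter_upwards [eventually_gt_atTop 0] with n hn
  exact minimaxDeviation_localParam_le hn β _ (fun ϑ => Pmeas (X n) ϑ (σ ^ 2))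
    (fun ϑ => mavgCdf α (σ ^ 2) (X n) ϑ t) δ

/-- minimax impossibility result (19): no estimator of `F_{n,ϑ,σ}(t)` can be
uniformly consistent over shrinking balls around a point `β` of the restricted model. -/
theorem statement13 {k₁ k₂ : ℕ} (hk₁ : 0 < k₁) (hk₂ : k₂ = 1)
    (X : ∀ n : ℕ, Matrix (Fin n) (Fin k₁ ⊕ Fin k₂) ℝ)
    (hX : ∀ n, k₁ + k₂ ≤ n → (X n).rank = k₁ + k₂)
    (Q : Matrix (Fin k₁ ⊕ Fin k₂) (Fin k₁ ⊕ Fin k₂) ℝ) (hQ : Q.PosDef)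
    (hQ12 : Q.toBlocks₁₂ = 0)
    (hlim : Tendsto (fun n : ℕ => (n : ℝ)⁻¹ • ((X n)ᵀ * X n)) atTop (𝓝 Q))
    (σ α : ℝ) (hσ : 0 < σ) (hα : 0 < α) :
    ∀ t : (Fin k₁ ⊕ Fin k₂) → ℝ, ∃ ρ₀ : ℝ, 0 < ρ₀ ∧
      ∀ β : (Fin k₁ ⊕ Fin k₂) → ℝ, β ∘ Sum.inr = 0 →
        (1 / 2 : ℝ≥0∞) ≤ ⨆ δ : ℝ, ⨆ (_ : 0 < δ),
          Filter.liminf (fun n : ℕ =>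
              ⨅ G : (Fin n → ℝ) → ℝ, ⨅ (_ : Measurable G),
                ⨆ ϑ : (Fin k₁ ⊕ Fin k₂) → ℝ,
                  ⨆ (_ : enorm2 (ϑ - β) < ρ₀ / Real.sqrt n),
                  Pmeas (X n) ϑ (σ ^ 2)
                    {Y | δ < |G Y -
                      (Pmeas (X n) ϑ (σ ^ 2)
                        {Y' | ∀ i, Real.sqrt n * (mavg α (σ ^ 2) (X n) Y' i - ϑ i) ≤
                          t i}).toReal|})
            atTop :=
  statement13_general (by omega) X Q hQ hQ12 hlim σ α hσ hα.le

end
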